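/- (Pointwise domination by Hardy–Littlewood maximal functions.) Let n ≥ 5. There exists a constant C = C(n) such that for all functions f₁,…,f_n : ℤ → ℂ and every y ∈ ℤ, A_*[f₁,…,f_n](y) ≤ C ∏_{i=1}^n ( sup_{N ≥ 1} N^{−1} Σ_{x ∈ [−N,N] ∩ ℤ} |f_i(y − x)|² )^{1/2}, where the supremum is over integers N ≥ 1. -/

import Mathlib

open scoped BigOperators ENNReal NNReal
open MeasureTheory Finset

noncomputable section

/-- `sphereCount n lam` is the number of lattice points `x ∈ ℤ^n` with
`x₁² + ⋯ + x_n² = lam`. -/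
def sphereCount (n lam : ℕ) : ℕ :=
  {x : Fin n → ℤ | ∑ i, (x i) ^ 2 = (lam : ℤ)}.ncard

/-- The multilinear spherical average
`A_lam[f₁,…,f_n](y) = (1/r_n(lam)) ∑_{|x|² = lam} f₁(y-x₁)⋯f_n(y-x_n)`. -/
def mulAvg (n lam : ℕ) (f : Fin n → ℤ → ℂ) (y : ℤ) : ℂ :=
  (sphereCount n lam : ℂ)⁻¹ *
    ∑ᶠ x ∈ {x : Fin n → ℤ | ∑ i, (x i) ^ 2 = (lam : ℤ)}, ∏ i, f i (y - x i)

/-- The maximal function `A_*[f₁,…,f_n](y) = sup_{lam ≥ 1} |A_lam[f₁,…,f_n](y)|`. -/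
def maxFn (n : ℕ) (f : Fin n → ℤ → ℂ) (y : ℤ) : ℝ≥0∞ :=
  ⨆ (lam : ℕ) (_ : 1 ≤ lam), (‖mulAvg n lam f y‖₊ : ℝ≥0∞)

/-- The `ℓ^p(ℤ)` norm of a complex-valued function, valued in `ℝ≥0∞`. -/
def lpNorm (p : ℝ) (g : ℤ → ℂ) : ℝ≥0∞ :=
  (∑' x : ℤ, (‖g x‖₊ : ℝ≥0∞) ^ p) ^ (1 / p)

/-- The `ℓ^q(ℤ)` norm of an `ℝ≥0∞`-valued function. -/
def lqNormE (q : ℝ) (g : ℤ → ℝ≥0∞) : ℝ≥0∞ :=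
  (∑' x : ℤ, g x ^ q) ^ (1 / q)

namespace S14
/-! ## Four squares: lower bound -/

def zX (w : ℤ) : Finset (ℤ × ℤ × ℤ) :=
  (Icc (-w) w ×ˢ Icc 1 w ×ˢ Icc 1 w).filter fun x => x.1 ^ 2 + 4 * x.2.1 * x.2.2 = w

lemma mem_zX {w : ℤ} {x : ℤ × ℤ × ℤ} :
    x ∈ zX w ↔ 0 < x.2.1 ∧ 0 < x.2.2 ∧ x.1 ^ 2 + 4 * x.2.1 * x.2.2 = w := by
  obtain ⟨k, d, e⟩ := x
  simp only [zX, mem_filter, mem_product, mem_Icc]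
  constructor
  · rintro ⟨⟨_, ⟨h1, _⟩, ⟨h2, _⟩⟩, h⟩
    exact ⟨by omega, by omega, h⟩
  · rintro ⟨h1, h2, h⟩
    have hde : 0 < d * e := mul_pos h1 h2
    have hk : k ^ 2 ≤ w := by nlinarith
    refine ⟨⟨⟨?_, ?_⟩, ⟨by omega, ?_⟩, ⟨by omega, ?_⟩⟩, h⟩ <;> nlinarith [sq_nonneg k, sq_nonneg (k-1), sq_nonneg (k+1)]

def zp (x : ℤ × ℤ × ℤ) : ℤ := (x.2.1 + x.2.2) * (x.2.2 + x.1) * (x.2.1 - x.1)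

lemma not_sq_mod8 (a w : ℤ) (hw : w % 8 = 5) : a ^ 2 ≠ w := by
  intro h
  have : a % 8 = 0 ∨ a % 8 = 1 ∨ a % 8 = 2 ∨ a % 8 = 3 ∨ a % 8 = 4 ∨ a % 8 = 5 ∨ a % 8 = 6 ∨ a % 8 = 7 := by omega
  have h2 : (a ^ 2) % 8 = ((a % 8) ^ 2) % 8 := by simp [pow_two, Int.mul_emod]
  rcases this with h' | h' | h' | h' | h' | h' | h' | h' <;> rw [h'] at h2 <;> omega

lemma sum_zA (w : ℤ) : ∑ x ∈ (zX w).filter (fun x => x.2.1 < x.2.2 + x.1), zp x = 0 := by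
  refine Finset.sum_involution (fun x _ => (2 * x.2.1 - x.1, x.2.1, x.2.2 + x.1 - x.2.1)) ?_ ?_ ?_ ?_
  · rintro ⟨k, d, e⟩ h
    simp only [zp]; ring
  · rintro ⟨k, d, e⟩ h h0 h1
    simp only [Prod.mk.injEq] at h1
    apply h0
    have : d - k = 0 := by omega
    simp [zp, this]
  · rintro ⟨k, d, e⟩ h
    simp only [mem_filter, mem_zX] at h ⊢
    obtain ⟨⟨h1, h2, h3⟩, h4⟩ := h
    refine ⟨⟨h1, by omega, ?_⟩, by omega⟩
    rw [← h3]; ring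
  · rintro ⟨k, d, e⟩ h
    simp only [Prod.mk.injEq]
    refine ⟨by ring, trivial, by ring⟩

lemma sum_zB (w : ℤ) (hw : w % 8 = 5) :
    ∑ x ∈ (zX w).filter (fun x => ¬ x.2.1 < x.2.2 + x.1), zp x = 0 := by
  rw [← sum_zA w]
  refine Finset.sum_nbij' (fun x => (-x.1, x.2.2, x.2.1)) (fun x => (-x.1, x.2.2, x.2.1)) ?_ ?_ ?_ ?_ ?_
  · rintro ⟨k, d, e⟩ h
    simp only [mem_filter, mem_zX] at h ⊢
    obtain ⟨⟨h1, h2, h3⟩, h4⟩ := h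
    have : d ≠ e + k := by
      intro h
      apply not_sq_mod8 (d + e) w hw
      rw [← h3]
      have : k = d - e := by omega
      rw [this]; ring
    refine ⟨⟨h2, h1, ?_⟩, by omega⟩
    rw [← h3]; ring
  · rintro ⟨k, d, e⟩ h
    simp only [mem_filter, mem_zX] at h ⊢
    obtain ⟨⟨h1, h2, h3⟩, h4⟩ := h
    refine ⟨⟨h2, h1, ?_⟩, by omega⟩
    rw [← h3]; ring
  · rintro ⟨k, d, e⟩ h; simp
  · rintro ⟨k, d, e⟩ h; simp
  · rintro ⟨k, d, e⟩ h
    simp only [zp]; ring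

lemma sum_zX_neg (w : ℤ) (g : ℤ × ℤ × ℤ → ℤ) :
    ∑ x ∈ zX w, g x = ∑ x ∈ zX w, g (-x.1, x.2.1, x.2.2) := by
  refine Finset.sum_nbij' (fun x => (-x.1, x.2.1, x.2.2)) (fun x => (-x.1, x.2.1, x.2.2)) ?_ ?_ ?_ ?_ ?_
  all_goals rintro ⟨k, d, e⟩ h; simp_all [mem_zX]

lemma sum_zX_swap (w : ℤ) (g : ℤ × ℤ × ℤ → ℤ) :
    ∑ x ∈ zX w, g x = ∑ x ∈ zX w, g (x.1, x.2.2, x.2.1) := by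
  refine Finset.sum_nbij' (fun x => (x.1, x.2.2, x.2.1)) (fun x => (x.1, x.2.2, x.2.1)) ?_ ?_ ?_ ?_ ?_
  all_goals rintro ⟨k, d, e⟩ h; simp_all [mem_zX]
  all_goals rw [← h.2.2]; ring

lemma zagier (w : ℤ) (hw : w % 8 = 5) : ∑ x ∈ zX w, x.2.1 * (x.2.1 * x.2.2 - x.1 ^ 2) = 0 := by
  have h1 : ∑ x ∈ zX w, zp x = 0 := by
    rw [← Finset.sum_filter_add_sum_filter_not (zX w) (fun x => x.2.1 < x.2.2 + x.1), sum_zA,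
      sum_zB w hw]; rfl
  have h2 := sum_zX_neg w zp
  have h3 := sum_zX_swap w fun x => x.2.1 * (x.2.1 * x.2.2 - x.1 ^ 2)
  have h4 : ∑ x ∈ zX w, zp x + ∑ x ∈ zX w, zp (-x.1, x.2.1, x.2.2) =
     2 * (∑ x ∈ zX w, x.2.1 * (x.2.1 * x.2.2 - x.1 ^ 2) + ∑ x ∈ zX w, x.2.2 * (x.2.2 * x.2.1 - x.1 ^ 2)) := by
    rw [← Finset.sum_add_distrib, ← Finset.sum_add_distrib, Finset.mul_sum]
    refine Finset.sum_congr rfl fun x _ => ?_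
    simp only [zp]; ring
  rw [← h2, h1] at h4
  simp only at h3
  linarith

lemma zagier_pos (w : ℤ) (hw : w % 8 = 5) :
    ∑ x ∈ (zX w).filter (fun x => 0 < x.1), x.2.1 * (x.2.1 * x.2.2 - x.1 ^ 2) = 0 := by
  have h := zagier w hw
  rw [← Finset.sum_filter_add_sum_filter_not (zX w) (fun x => 0 < x.1)] at h
  have : ∑ x ∈ (zX w).filter (fun x => ¬ 0 < x.1), x.2.1 * (x.2.1 * x.2.2 - x.1 ^ 2) =
     ∑ x ∈ (zX w).filter (fun x => 0 < x.1), x.2.1 * (x.2.1 * x.2.2 - x.1 ^ 2) := by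
    refine Finset.sum_nbij' (fun x => (-x.1, x.2.1, x.2.2)) (fun x => (-x.1, x.2.1, x.2.2)) ?_ ?_ ?_ ?_ ?_
    · rintro ⟨k, d, e⟩ h
      simp only [mem_filter, mem_zX] at h ⊢
      obtain ⟨⟨h1, h2, h3⟩, h4⟩ := h
      have : k ≠ 0 := by
        rintro rfl
        have : 4 * (d * e) = w := by rw [← h3]; ring
        omega
      refine ⟨⟨h1, h2, ?_⟩, by omega⟩
      rw [← h3]; ring
    · rintro ⟨k, d, e⟩ h
      simp only [mem_filter, mem_zX] at h ⊢
      obtain ⟨⟨h1, h2, h3⟩, h4⟩ := h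
      refine ⟨⟨h1, h2, ?_⟩, by omega⟩
      rw [← h3]; ring
    all_goals rintro ⟨k, d, e⟩ h; simp
  linarith

def oddS (w : ℕ) : Finset ℕ := (range (w + 1)).filter Odd

lemma mem_oddS {w k : ℕ} : k ∈ oddS w ↔ k ≤ w ∧ Odd k := by
  simp [oddS, Nat.lt_succ_iff]

/-- the divisor sum recursion -/
lemma sigma_rec (w : ℕ) (hw : w % 8 = 5) :
    ∑ k ∈ oddS w, ((w : ℤ) - 5 * (k : ℤ) ^ 2) * ((∑ d ∈ ((w - k ^ 2) / 4).divisors, d : ℕ) : ℤ) = 0 := by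
  have h := zagier_pos w (by omega)
  have h2 : ∑ k ∈ oddS w, ((w : ℤ) - 5 * (k : ℤ) ^ 2) * ((∑ d ∈ ((w - k ^ 2) / 4).divisors, d : ℕ) : ℤ)
     = 4 * ∑ x ∈ (zX w).filter (fun x => 0 < x.1), x.2.1 * (x.2.1 * x.2.2 - x.1 ^ 2) := by
    push_cast
    simp_rw [Finset.mul_sum]
    rw [Finset.sum_sigma']
    refine Finset.sum_nbij' (fun x => ((x.1 : ℤ), (x.2 : ℤ), ((((w - x.1 ^ 2) / 4) / x.2 : ℕ) : ℤ)))
      (fun x => ⟨x.1.toNat, x.2.1.toNat⟩) ?_ ?_ ?_ ?_ ?_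
    · rintro ⟨k, d⟩ h
      simp only [mem_sigma, mem_oddS, Nat.mem_divisors] at h
      obtain ⟨⟨h1, h2⟩, ⟨e, he⟩, h4⟩ := h
      have hd : 0 < d := by
        rcases Nat.eq_zero_or_pos d with rfl | h
        · simp at he; omega
        · exact h
      have hee : 0 < e := by
        rcases Nat.eq_zero_or_pos e with rfl | h
        · simp at he; omega
        · exact h
      have hk0 : k ^ 2 % 8 = 1 := by
        obtain ⟨m, rfl⟩ := h2
        have : (2 * m + 1) ^ 2 = 8 * (m * (m + 1) / 2) + 1 := by
          have := Nat.even_mul_succ_self m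
          obtain ⟨r, hr⟩ := this
          have : m * (m+1) / 2 = r := by omega
          rw [this]; nlinarith
        omega
      have : k ^ 2 + 4 * (d * e) = w := by omega
      simp only [mem_filter, mem_zX]
      rw [he, Nat.mul_div_cancel_left _ hd]
      refine ⟨⟨by exact_mod_cast hd, by exact_mod_cast hee, ?_⟩, ?_⟩
      · rw [← this]; push_cast; ring
      · have := h2.pos; exact_mod_cast this
    · rintro ⟨k, d, e⟩ h
      simp only [mem_filter, mem_zX] at h
      obtain ⟨⟨h1, h2, h3⟩, h4⟩ := h
      lift k to ℕ using h4.le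
      lift d to ℕ using h1.le
      lift e to ℕ using h2.le
      have h3' : k ^ 2 + 4 * d * e = w := by exact_mod_cast h3
      have h1' : 0 < d := by exact_mod_cast h1
      have h2' : 0 < e := by exact_mod_cast h2
      have : (w - k ^ 2) / 4 = d * e := by
        have : k ^ 2 + 4 * (d * e) = w := by rw [← h3']; ring
        omega
      simp only [mem_sigma, mem_oddS, Nat.mem_divisors, Int.toNat_natCast]
      rw [this]
      refine ⟨⟨?_, ?_⟩, ⟨e, rfl⟩, by positivity⟩
      · nlinarith [Nat.zero_le (d * e)]
      · by_contra hcon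
        rw [Nat.not_odd_iff_even] at hcon
        obtain ⟨r, rfl⟩ := hcon
        have : (r + r) ^ 2 + 4 * d * e = 4 * (r * r + d * e) := by ring
        omega
    · rintro ⟨k, d⟩ h
      simp
    · rintro ⟨k, d, e⟩ h
      simp only [mem_filter, mem_zX] at h
      obtain ⟨⟨h1, h2, h3⟩, h4⟩ := h
      lift k to ℕ using h4.le
      lift d to ℕ using h1.le
      lift e to ℕ using h2.le
      have h3' : k ^ 2 + 4 * d * e = w := by exact_mod_cast h3
      have h1' : 0 < d := by exact_mod_cast h1
      have : (w - k ^ 2) / 4 = d * e := by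
        have : k ^ 2 + 4 * (d * e) = w := by rw [← h3']; ring
        omega
      simp only [Int.toNat_natCast, this, Nat.mul_div_cancel_left _ h1']
    · rintro ⟨k, d⟩ h
      simp only [mem_sigma, mem_oddS, Nat.mem_divisors] at h
      obtain ⟨⟨h1, h2⟩, ⟨e, he⟩, h4⟩ := h
      have hd : 0 < d := by
        rcases Nat.eq_zero_or_pos d with rfl | h
        · simp at he; omega
        · exact h
      have hk0 : k ^ 2 % 8 = 1 := by
        obtain ⟨m, rfl⟩ := h2
        have : (2 * m + 1) ^ 2 = 8 * (m * (m + 1) / 2) + 1 := by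
          have := Nat.even_mul_succ_self m
          obtain ⟨r, hr⟩ := this
          have : m * (m+1) / 2 = r := by omega
          rw [this]; nlinarith
        omega
      have : k ^ 2 + 4 * (d * e) = w := by omega
      simp only
      rw [he, Nat.mul_div_cancel_left _ hd, ← this]
      push_cast; ring
  rw [h2, h]; rfl

def qs (p : ℕ × ℕ × ℕ × ℕ) : ℕ := p.1 ^ 2 + p.2.1 ^ 2 + p.2.2.1 ^ 2 + p.2.2.2 ^ 2

def quadF (v : ℕ) : Finset (ℕ × ℕ × ℕ × ℕ) :=
  (oddS v ×ˢ oddS v ×ˢ oddS v ×ˢ oddS v).filter fun p => qs p = v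

lemma mem_quadF {v : ℕ} {p : ℕ × ℕ × ℕ × ℕ} :
    p ∈ quadF v ↔ Odd p.1 ∧ Odd p.2.1 ∧ Odd p.2.2.1 ∧ Odd p.2.2.2 ∧ qs p = v := by
  obtain ⟨a, b, c, d⟩ := p
  simp only [quadF, mem_filter, mem_product, mem_oddS]
  simp only [qs]
  constructor
  · tauto
  · rintro ⟨h1, h2, h3, h4, h5⟩
    refine ⟨⟨⟨?_, h1⟩, ⟨?_, h2⟩, ⟨?_, h3⟩, ⟨?_, h4⟩⟩, h5⟩ <;> nlinarith

def S5 (w : ℕ) : Finset (ℕ × ℕ × ℕ × ℕ × ℕ) :=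
  (oddS w ×ˢ oddS w ×ˢ oddS w ×ˢ oddS w ×ˢ oddS w).filter fun p => p.1 ^ 2 + qs p.2 = w

lemma quad_rec (w : ℕ) :
    ∑ k ∈ oddS w, ((w : ℤ) - 5 * (k : ℤ) ^ 2) * ((quadF (w - k ^ 2)).card : ℤ) = 0 := by
  have h1 : ∑ p ∈ S5 w, ((w : ℤ) - 5 * (p.1 : ℤ) ^ 2) = 0 := by
    have e1 : ∑ p ∈ S5 w, (p.1 : ℤ) ^ 2 = ∑ p ∈ S5 w, (p.2.1 : ℤ) ^ 2 := by
      refine Finset.sum_nbij' (fun p => (p.2.1, p.1, p.2.2)) (fun p => (p.2.1, p.1, p.2.2)) ?_ ?_ ?_ ?_ ?_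
      all_goals rintro ⟨a, b, c, d, e⟩ h; simp only [S5, mem_filter, mem_product] at h ⊢; try simp only [qs] at h ⊢
      · refine ⟨by tauto, by omega⟩
      · refine ⟨by tauto, by omega⟩
    have e2 : ∑ p ∈ S5 w, (p.1 : ℤ) ^ 2 = ∑ p ∈ S5 w, (p.2.2.1 : ℤ) ^ 2 := by
      refine Finset.sum_nbij' (fun p => (p.2.2.1, p.2.1, p.1, p.2.2.2)) (fun p => (p.2.2.1, p.2.1, p.1, p.2.2.2)) ?_ ?_ ?_ ?_ ?_
      all_goals rintro ⟨a, b, c, d, e⟩ h; simp only [S5, mem_filter, mem_product] at h ⊢; try simp only [qs] at h ⊢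
      · refine ⟨by tauto, by omega⟩
      · refine ⟨by tauto, by omega⟩
    have e3 : ∑ p ∈ S5 w, (p.1 : ℤ) ^ 2 = ∑ p ∈ S5 w, (p.2.2.2.1 : ℤ) ^ 2 := by
      refine Finset.sum_nbij' (fun p => (p.2.2.2.1, p.2.1, p.2.2.1, p.1, p.2.2.2.2)) (fun p => (p.2.2.2.1, p.2.1, p.2.2.1, p.1, p.2.2.2.2)) ?_ ?_ ?_ ?_ ?_
      all_goals rintro ⟨a, b, c, d, e⟩ h; simp only [S5, mem_filter, mem_product] at h ⊢; try simp only [qs] at h ⊢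
      · refine ⟨by tauto, by omega⟩
      · refine ⟨by tauto, by omega⟩
    have e4 : ∑ p ∈ S5 w, (p.1 : ℤ) ^ 2 = ∑ p ∈ S5 w, (p.2.2.2.2 : ℤ) ^ 2 := by
      refine Finset.sum_nbij' (fun p => (p.2.2.2.2, p.2.1, p.2.2.1, p.2.2.2.1, p.1)) (fun p => (p.2.2.2.2, p.2.1, p.2.2.1, p.2.2.2.1, p.1)) ?_ ?_ ?_ ?_ ?_
      all_goals rintro ⟨a, b, c, d, e⟩ h; simp only [S5, mem_filter, mem_product] at h ⊢; try simp only [qs] at h ⊢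
      · refine ⟨by tauto, by omega⟩
      · refine ⟨by tauto, by omega⟩
    have e5 : ∑ p ∈ S5 w, (w : ℤ) = ∑ p ∈ S5 w, (p.1 : ℤ) ^ 2 + ∑ p ∈ S5 w, (p.2.1 : ℤ) ^ 2 +
        ∑ p ∈ S5 w, (p.2.2.1 : ℤ) ^ 2 + ∑ p ∈ S5 w, (p.2.2.2.1 : ℤ) ^ 2 + ∑ p ∈ S5 w, (p.2.2.2.2 : ℤ) ^ 2 := by
      simp_rw [← Finset.sum_add_distrib]
      refine Finset.sum_congr rfl ?_
      rintro ⟨a, b, c, d, e⟩ h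
      simp only [S5, mem_filter] at h
      simp only [qs] at h
      rw [← h.2]; push_cast; ring
    rw [Finset.sum_sub_distrib, ← Finset.mul_sum, e5]
    linarith
  rw [← h1, S5, Finset.sum_filter, Finset.sum_product]
  refine Finset.sum_congr rfl fun k hk => ?_
  rw [← Finset.sum_filter]
  simp only
  rw [Finset.sum_const, nsmul_eq_mul, mul_comm]
  congr 3
  ext ⟨a, b, c, d⟩
  rw [mem_quadF]
  simp only [mem_filter, mem_product, mem_oddS]
  simp only [qs]
  constructor
  · rintro ⟨h1, h2, h3, h4, h⟩
    have := h1.pos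
    have : 0 < a ^ 2 := by positivity
    have hh : k ^ 2 + (a ^ 2 + b ^ 2 + c ^ 2 + d ^ 2) = w := by omega
    refine ⟨⟨⟨?_, h1⟩, ⟨?_, h2⟩, ⟨?_, h3⟩, ⟨?_, h4⟩⟩, hh⟩ <;> nlinarith
  · rintro ⟨⟨h1, h2, h3, h4⟩, h⟩
    exact ⟨h1.2, h2.2, h3.2, h4.2, by omega⟩

lemma odd_sq_mod (k : ℕ) (h : Odd k) : k ^ 2 % 8 = 1 := by
  obtain ⟨m, rfl⟩ := h
  obtain ⟨r, hr⟩ := Nat.even_mul_succ_self m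
  have : (2 * m + 1) ^ 2 = 8 * r + 1 := by nlinarith
  omega

lemma quad_card (u : ℕ) (hu : Odd u) : (quadF (4 * u)).card = ∑ d ∈ u.divisors, d := by
  induction u using Nat.strong_induction_on with
  | _ u ih =>
  obtain ⟨m, rfl⟩ := hu
  rcases Nat.eq_zero_or_pos m with rfl | hm
  · rfl
  have hw : (4 * (2 * m + 1) + 1) % 8 = 5 := by omega
  have h1 := quad_rec (4 * (2 * m + 1) + 1)
  have h2 := sigma_rec (4 * (2 * m + 1) + 1) hw
  set w := 4 * (2 * m + 1) + 1 with hwdef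
  have h1m : 1 ∈ oddS w := by simp [mem_oddS]; omega
  rw [← Finset.add_sum_erase _ _ h1m] at h1 h2
  have : ∑ k ∈ (oddS w).erase 1, ((w : ℤ) - 5 * (k : ℤ) ^ 2) * ((quadF (w - k ^ 2)).card : ℤ) =
     ∑ k ∈ (oddS w).erase 1, ((w : ℤ) - 5 * (k : ℤ) ^ 2) * ((∑ d ∈ ((w - k ^ 2) / 4).divisors, d : ℕ) : ℤ) := by
    refine Finset.sum_congr rfl fun k hk => ?_
    rw [mem_erase, mem_oddS] at hk
    obtain ⟨hk1, hk2, hk3⟩ := hk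
    congr 2
    have h8 := odd_sq_mod k hk3
    rcases Nat.lt_or_ge (k ^ 2) w with hlt | hge
    · have h4 : w - k ^ 2 = 4 * ((w - k ^ 2) / 4) := by omega
      have hk9 : 1 < k ^ 2 := by
        have := hk3.pos
        have : 2 ≤ k := by omega
        nlinarith
      conv_lhs => rw [h4]
      rw [ih]
      · omega
      · rw [Nat.odd_iff]; omega
    · have : w - k ^ 2 = 0 := by omega
      rw [this]
      simp [quadF, oddS]
      intro a b c d h1 h2
      subst h1
      exact absurd h2 (by decide)
  rw [this] at h1
  have h3 : ((w : ℤ) - 5 * ((1:ℕ) : ℤ) ^ 2) * ((quadF (w - 1 ^ 2)).card : ℤ) = ((w : ℤ) - 5 * ((1:ℕ) : ℤ) ^ 2) * ((∑ d ∈ ((w - 1 ^ 2) / 4).divisors, d : ℕ) : ℤ) := by linarith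
  have h4 : ((w : ℤ) - 5 * ((1:ℕ) : ℤ) ^ 2) ≠ 0 := by push_cast; omega
  have h5 := mul_left_cancel₀ h4 h3
  have h6 : w - 1 ^ 2 = 4 * (2 * m + 1) := by omega
  rw [h6] at h5
  rw [Nat.mul_div_cancel_left _ (by norm_num)] at h5
  exact_mod_cast h5

lemma sphere_finite (n : ℕ) (m : ℤ) : {x : Fin n → ℤ | ∑ i, (x i) ^ 2 = m}.Finite := by
  refine (Set.finite_Icc (fun _ : Fin n => -m) (fun _ => m)).subset ?_
  intro x hx
  simp only [Set.mem_ofPred_eq] at hx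
  have h : ∀ i, (x i) ^ 2 ≤ m := fun i => by
    rw [← hx]
    exact Finset.single_le_sum (f := fun i => (x i)^2) (fun i _ => sq_nonneg _) (mem_univ i)
  refine ⟨fun i => ?_, fun i => ?_⟩
  · have := h i; show -m ≤ x i; nlinarith
  · have := h i; show x i ≤ m; nlinarith

def sphF (n : ℕ) (m : ℤ) : Finset (Fin n → ℤ) := (sphere_finite n m).toFinset

lemma mem_sphF {n : ℕ} {m : ℤ} {x : Fin n → ℤ} : x ∈ sphF n m ↔ ∑ i, (x i) ^ 2 = m := by
  simp [sphF]

lemma sphereCount_eq (n lam : ℕ) : sphereCount n lam = (sphF n lam).card := by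
  rw [sphereCount, sphF, Set.ncard_eq_toFinset_card _ (sphere_finite n lam)]

def sgnA (p : ℕ × ℕ × ℕ × ℕ) : ℤ :=
  if ((p.1 : ℤ) + p.2.1 + p.2.2.1 + p.2.2.2) % 4 = 0 then p.1 else -p.1

def hadm (p : ℕ × ℕ × ℕ × ℕ) : Fin 4 → ℤ :=
  ![(sgnA p + p.2.1 + p.2.2.1 + p.2.2.2) / 4, (sgnA p + p.2.1 - p.2.2.1 - p.2.2.2) / 4,
    (sgnA p - p.2.1 + p.2.2.1 - p.2.2.2) / 4, (sgnA p - p.2.1 - p.2.2.1 + p.2.2.2) / 4]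

lemma hadm_spec (p : ℕ × ℕ × ℕ × ℕ) (h1 : Odd p.1) (h2 : Odd p.2.1) (h3 : Odd p.2.2.1) (h4 : Odd p.2.2.2) :
    4 * hadm p 0 = sgnA p + p.2.1 + p.2.2.1 + p.2.2.2 ∧
    4 * hadm p 1 = sgnA p + p.2.1 - p.2.2.1 - p.2.2.2 ∧
    4 * hadm p 2 = sgnA p - p.2.1 + p.2.2.1 - p.2.2.2 ∧
    4 * hadm p 3 = sgnA p - p.2.1 - p.2.2.1 + p.2.2.2 ∧ (sgnA p = p.1 ∨ sgnA p = - p.1) := by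
  obtain ⟨a, b, c, d⟩ := p
  simp only [hadm] at *
  obtain ⟨a, rfl⟩ := h1
  obtain ⟨b, rfl⟩ := h2
  obtain ⟨c, rfl⟩ := h3
  obtain ⟨d, rfl⟩ := h4
  have hs : (sgnA (2 * a + 1, 2 * b + 1, 2 * c + 1, 2 * d + 1) = 2 * a + 1 ∨ sgnA (2 * a + 1, 2 * b + 1, 2 * c + 1, 2 * d + 1) = - (2 * a + 1)) ∧ (sgnA (2 * a + 1, 2 * b + 1, 2 * c + 1, 2 * d + 1) + (2 * b + 1) + (2 * c + 1) + (2 * d + 1)) % 4 = 0 := by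
    simp only [sgnA]
    push_cast
    split_ifs with h
    · exact ⟨Or.inl rfl, h⟩
    · exact ⟨Or.inr rfl, by omega⟩
  generalize sgnA (2 * a + 1, 2 * b + 1, 2 * c + 1, 2 * d + 1) = s at *
  simp
  refine ⟨by omega, by omega, by omega, by omega, by omega⟩

lemma four_lower (u : ℕ) (hu : Odd u) : u ≤ sphereCount 4 u := by
  have h1 : u ≤ (quadF (4 * u)).card := by
    rw [quad_card u hu]
    exact Finset.single_le_sum (f := fun d => d) (fun _ _ => Nat.zero_le _)
      (Nat.mem_divisors_self u hu.pos.ne')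
  refine h1.trans ?_
  rw [sphereCount_eq]
  refine Finset.card_le_card_of_injOn hadm ?_ ?_
  · intro p hp
    have hp := mem_quadF.1 hp
    obtain ⟨o1, o2, o3, o4, hq⟩ := hp
    obtain ⟨e1, e2, e3, e4, e5⟩ := hadm_spec p o1 o2 o3 o4
    rw [mem_coe, mem_sphF]
    simp only [Fin.sum_univ_four]
    have hq' : (p.1 : ℤ) ^ 2 + (p.2.1 : ℤ) ^ 2 + (p.2.2.1 : ℤ) ^ 2 + (p.2.2.2 : ℤ) ^ 2 = 4 * u := by
      exact_mod_cast hq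
    have hs : (sgnA p) ^ 2 = (p.1 : ℤ) ^ 2 := by rcases e5 with h | h <;> rw [h] <;> ring
    have : 16 * (hadm p 0 ^ 2 + hadm p 1 ^ 2 + hadm p 2 ^ 2 + hadm p 3 ^ 2) = 4 * ((sgnA p) ^ 2 + (p.2.1 : ℤ) ^ 2 + (p.2.2.1 : ℤ) ^ 2 + (p.2.2.2 : ℤ) ^ 2) := by
      have : 16 * (hadm p 0 ^ 2 + hadm p 1 ^ 2 + hadm p 2 ^ 2 + hadm p 3 ^ 2) = (4 * hadm p 0) ^ 2 + (4 * hadm p 1) ^ 2 + (4 * hadm p 2) ^ 2 + (4 * hadm p 3) ^ 2 := by ring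
      rw [this, e1, e2, e3, e4]; ring
    rw [hs, hq'] at this
    linarith
  · intro p hp p' hp' hh
    have hp := mem_quadF.1 hp
    have hp' := mem_quadF.1 hp'
    obtain ⟨o1, o2, o3, o4, hq⟩ := hp
    obtain ⟨e1, e2, e3, e4, e5⟩ := hadm_spec p o1 o2 o3 o4
    obtain ⟨o1', o2', o3', o4', hq'⟩ := hp'
    obtain ⟨e1', e2', e3', e4', e5'⟩ := hadm_spec p' o1' o2' o3' o4'
    rw [hh] at e1 e2 e3 e4
    obtain ⟨a, b, c, d⟩ := p
    obtain ⟨a', b', c', d'⟩ := p'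
    simp only at *
    simp only [Prod.mk.injEq]
    refine ⟨by omega, by omega, by omega, by omega⟩

lemma sphere_succ_lower (n lam : ℕ) (S : Finset ℕ) (hS : ∀ x ∈ S, x ^ 2 ≤ lam) :
    ∑ x ∈ S, sphereCount n (lam - x ^ 2) ≤ sphereCount (n + 1) lam := by
  simp_rw [sphereCount_eq]
  rw [← Finset.card_sigma]
  refine Finset.card_le_card_of_injOn (fun p => (Fin.cons (p.1 : ℤ) p.2 : Fin (n+1) → ℤ)) ?_ ?_
  · rintro ⟨x, v⟩ h
    simp only [coe_sigma, Set.mem_sigma_iff, mem_coe, mem_sphF] at h ⊢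
    have := hS x h.1
    rw [Fin.sum_univ_succ]
    simp only [Fin.cons_zero, Fin.cons_succ]
    rw [h.2]
    push_cast [this]; ring
  · rintro ⟨x, v⟩ h ⟨x', v'⟩ h' hh
    simp only at hh
    have h1 := congrFun hh 0
    simp only [Fin.cons_zero] at h1
    have h1 : x = x' := by exact_mod_cast h1
    subst h1
    have : v = v' := by
      funext i
      have := congrFun hh i.succ
      simpa using this
    subst this
    rfl

lemma sphere_pos (n lam : ℕ) : 1 ≤ sphereCount (n + 4) lam := by
  induction n with
  | zero =>
    rw [sphereCount_eq, Nat.succ_le_iff, Finset.card_pos]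
    obtain ⟨a, b, c, d, h⟩ := Nat.sum_four_squares lam
    refine ⟨![a, b, c, d], ?_⟩
    rw [mem_sphF]
    simp [Fin.sum_univ_four]
    exact_mod_cast h
  | succ n ih =>
    have := sphere_succ_lower (n + 4) lam {0} (by simp)
    simp at this
    exact ih.trans this

lemma five_lower : ∃ c : ℝ, 0 < c ∧ ∀ lam : ℕ, 1 ≤ lam → c * (Real.sqrt lam) ^ 3 ≤ sphereCount 5 lam := by
  refine ⟨1 / 64, by norm_num, fun lam hl => ?_⟩
  set s := Real.sqrt lam with hs
  have hs2 : s ^ 2 = lam := Real.sq_sqrt (by positivity)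
  have hs0 : 0 ≤ s := Real.sqrt_nonneg _
  rcases lt_or_ge s 4 with h4 | h4
  · have : (1 : ℝ) ≤ sphereCount 5 lam := by exact_mod_cast sphere_pos 1 lam
    have : s ^ 3 ≤ 4 ^ 3 := by gcongr
    linarith
  · set T := ⌊s / 8⌋₊ with hT
    have hT1 : (T : ℝ) ≤ s / 8 := Nat.floor_le (by positivity)
    have hT2 : s / 8 < T + 1 := Nat.lt_floor_add_one _
    let e := (lam + 1) % 2
    have hx : ∀ t ∈ range (T + 1), ((2 * t + e : ℕ) : ℝ) ≤ s / 2 := by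
      intro t ht
      have h1 : t ≤ T := by simpa [Nat.lt_succ_iff] using ht
      have h1 : (t : ℝ) ≤ T := by exact_mod_cast h1
      have h2 : e ≤ 1 := by omega
      have h2 : (e : ℝ) ≤ 1 := by exact_mod_cast h2
      push_cast
      linarith
    have hx2 : ∀ t ∈ range (T + 1), (((2 * t + e) ^ 2 : ℕ) : ℝ) ≤ lam / 4 := by
      intro t ht
      have := hx t ht
      rw [← hs2]
      push_cast at this ⊢
      nlinarith [show (0:ℝ) ≤ 2 * t + e by positivity]
    have hinj : Function.Injective (fun t : ℕ => 2 * t + e) := fun a b h => by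
      simp only at h; omega
    have key := sphere_succ_lower 4 lam ((range (T + 1)).image (fun t => 2 * t + e)) (by
      intro x hx'
      rw [mem_image] at hx'
      obtain ⟨t, ht, rfl⟩ := hx'
      have := hx2 t ht
      have h3 : (((2 * t + e) ^ 2 : ℕ) : ℝ) ≤ lam := this.trans (by linarith [show (0:ℝ) ≤ lam by positivity])
      exact_mod_cast h3)
    rw [Finset.sum_image (fun a _ b _ h => hinj h)] at key
    have key2 : ∑ t ∈ range (T + 1), ((lam : ℝ) * (3 / 4)) ≤ (sphereCount 5 lam : ℝ) := by
      refine le_trans ?_ (Nat.cast_le.2 key)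
      rw [Nat.cast_sum]
      refine Finset.sum_le_sum fun t ht => ?_
      have h1 := hx2 t ht
      have hle : (2 * t + e) ^ 2 ≤ lam := by
        have h3 : (((2 * t + e) ^ 2 : ℕ) : ℝ) ≤ lam := h1.trans (by linarith [show (0:ℝ) ≤ lam by positivity])
        exact_mod_cast h3
      have hodd : Odd (lam - (2 * t + e) ^ 2) := by
        rw [Nat.odd_iff]
        have : (2 * t + e) ^ 2 % 2 = e := by
          have : e = 0 ∨ e = 1 := by omega
          rcases this with h | h <;> rw [h] <;> ring_nf <;> omega
        omega
      have h2 := four_lower _ hodd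
      have h2 : ((lam - (2 * t + e) ^ 2 : ℕ) : ℝ) ≤ sphereCount 4 (lam - (2 * t + e) ^ 2) := by exact_mod_cast h2
      rw [Nat.cast_sub hle] at h2
      linarith
    rw [Finset.sum_const, card_range, nsmul_eq_mul] at key2
    push_cast at key2
    rw [← hs2] at key2
    have : 0 ≤ (T + 1 - s / 8) * (s ^ 2 * (3/4)) := by
      apply mul_nonneg <;> [linarith; positivity]
    nlinarith [pow_nonneg hs0 3]

lemma sphere_lower (n : ℕ) (hn : 5 ≤ n) :
    ∃ c : ℝ, 0 < c ∧ ∀ lam : ℕ, 1 ≤ lam → c * (Real.sqrt lam) ^ (n - 2) ≤ sphereCount n lam := by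
  induction n, hn using Nat.le_induction with
  | base => exact five_lower
  | succ n hn ih =>
    obtain ⟨c, hc, h⟩ := ih
    refine ⟨c / 2 ^ (n - 1), by positivity, fun lam hl => ?_⟩
    set s := Real.sqrt lam with hs
    have hs2 : s ^ 2 = lam := Real.sq_sqrt (by positivity)
    have hs0 : 0 ≤ s := Real.sqrt_nonneg _
    have hl1 : (1 : ℝ) ≤ lam := by exact_mod_cast hl
    set T := ⌊s / 2⌋₊ with hT
    have hT1 : (T : ℝ) ≤ s / 2 := Nat.floor_le (by positivity)
    have hT2 : s / 2 < T + 1 := Nat.lt_floor_add_one _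
    have hx2 : ∀ t ∈ range (T + 1), ((t ^ 2 : ℕ) : ℝ) ≤ lam / 4 := by
      intro t ht
      have h1 : t ≤ T := by simpa [Nat.lt_succ_iff] using ht
      have h1 : (t : ℝ) ≤ T := by exact_mod_cast h1
      rw [← hs2]
      push_cast
      nlinarith [show (0:ℝ) ≤ t by positivity]
    have hle : ∀ t ∈ range (T + 1), t ^ 2 ≤ lam := by
      intro t ht
      have h3 : ((t ^ 2 : ℕ) : ℝ) ≤ lam := (hx2 t ht).trans (by linarith)
      exact_mod_cast h3
    have key := sphere_succ_lower n lam (range (T + 1)) hle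
    have key2 : ∑ t ∈ range (T + 1), (c * (s / 2) ^ (n - 2)) ≤ (sphereCount (n + 1) lam : ℝ) := by
      refine le_trans ?_ (Nat.cast_le.2 key)
      rw [Nat.cast_sum]
      refine Finset.sum_le_sum fun t ht => ?_
      have h1 := hx2 t ht
      have h2 : ((lam - t ^ 2 : ℕ) : ℝ) = lam - ((t ^ 2 : ℕ) : ℝ) := Nat.cast_sub (hle t ht)
      refine le_trans ?_ (h (lam - t ^ 2) ?_)
      · gcongr
        apply Real.le_sqrt_of_sq_le
        rw [h2, div_pow, hs2]
        linarith
      · have : (0 : ℝ) < ((lam - t ^ 2 : ℕ) : ℝ) := by rw [h2]; linarith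
        exact_mod_cast this
    rw [Finset.sum_const, card_range, nsmul_eq_mul] at key2
    push_cast at key2
    refine le_trans ?_ key2
    have e : n + 1 - 2 = (n - 2) + 1 := by omega
    have e2 : n - 1 = (n - 2) + 1 := by omega
    rw [e, e2]
    calc c / 2 ^ (n - 2 + 1) * s ^ (n - 2 + 1) = (s / 2) * (c * (s / 2) ^ (n - 2)) := by
          rw [div_pow, pow_succ, pow_succ]; field_simp
      _ ≤ _ := by gcongr

/-! ## Divisor bounds -/

lemma divisor_bound (ε : ℝ) (hε : 0 < ε) :
    ∃ C : ℝ, 1 ≤ C ∧ ∀ n : ℕ, n ≠ 0 → (n.divisors.card : ℝ) ≤ C * (n : ℝ) ^ ε := by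
  set L := min 1 (ε * Real.log 2) with hL
  have hlog : 0 < Real.log 2 := Real.log_pos (by norm_num)
  have hL0 : 0 < L := lt_min one_pos (by positivity)
  have hL1 : L ≤ 1 := min_le_left _ _
  set K := 1 / L with hK
  have hK1 : 1 ≤ K := by rw [hK, le_div_iff₀ hL0]; linarith
  set P := ⌈(2 : ℝ) ^ (1 / ε)⌉₊ with hP
  refine ⟨K ^ P, one_le_pow₀ hK1, fun n hn => ?_⟩
  rw [Nat.card_divisors hn]
  have h1 : (n : ℝ) ^ ε = ∏ p ∈ n.primeFactors, ((p : ℝ) ^ (n.factorization p)) ^ ε := by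
    rw [Real.finsetProd_rpow _ _ (fun i _ => by positivity)]
    congr 1
    conv_lhs => rw [← Nat.prod_factorization_pow_eq_self hn]
    rw [Finsupp.prod, Nat.support_factorization]
    push_cast; rfl
  have h2 : ∏ p ∈ n.primeFactors, (if p < P then K else 1) ≤ K ^ P := by
    rw [Finset.prod_ite, Finset.prod_const, Finset.prod_const_one, mul_one]
    apply pow_le_pow_right₀ hK1
    calc _ ≤ (range P).card := by
          apply Finset.card_le_card
          intro p hp
          simp at hp ⊢; exact hp.2
      _ = P := card_range _
  rw [h1]
  push_cast
  calc ∏ p ∈ n.primeFactors, ((n.factorization p : ℝ) + 1)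
      ≤ ∏ p ∈ n.primeFactors, ((if p < P then K else 1) * ((p : ℝ) ^ (n.factorization p)) ^ ε) := by
        apply Finset.prod_le_prod
        · intros; positivity
        · intro p hp
          have hp2 : 2 ≤ p := (Nat.prime_of_mem_primeFactors hp).two_le
          have hp2' : (2 : ℝ) ≤ p := by exact_mod_cast hp2
          set a := n.factorization p
          split_ifs with h
          · have e1 : ((2 : ℝ) ^ a) ^ ε ≤ ((p : ℝ) ^ a) ^ ε := by gcongr
            have e2 : ((2 : ℝ) ^ a) ^ ε = Real.exp (ε * Real.log 2 * a) := by
              rw [← Real.rpow_natCast, ← Real.rpow_mul (by norm_num), Real.rpow_def_of_pos (by norm_num)]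
              congr 1; ring
            have e3 := Real.add_one_le_exp (ε * Real.log 2 * a)
            have e4 : L * (a + 1) ≤ ε * Real.log 2 * a + 1 := by
              have : L ≤ ε * Real.log 2 := min_le_right _ _
              have : L * a ≤ ε * Real.log 2 * a := by gcongr
              linarith
            have : L * (a + 1) ≤ ((p : ℝ) ^ a) ^ ε := by linarith
            rw [hK, div_mul_eq_mul_div, one_mul, le_div_iff₀ hL0]
            linarith
          · rw [one_mul]
            have e1 : (2 : ℝ) ≤ (p : ℝ) ^ ε := by
              have hpP : (2 : ℝ) ^ (1 / ε) ≤ p := (Nat.le_ceil _).trans (by exact_mod_cast not_lt.1 h)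
              calc (2 : ℝ) = ((2 : ℝ) ^ (1 / ε)) ^ ε := by
                    rw [← Real.rpow_mul (by norm_num), one_div, inv_mul_cancel₀ hε.ne', Real.rpow_one]
                _ ≤ _ := by gcongr
            have e2 : ((p : ℝ) ^ a) ^ ε = ((p : ℝ) ^ ε) ^ a := by
              rw [← Real.rpow_natCast, ← Real.rpow_mul (by positivity), ← Real.rpow_natCast, ← Real.rpow_mul (by positivity), mul_comm]
            rw [e2]
            have e3 : (a + 1 : ℝ) ≤ 2 ^ a := by
              have := Nat.lt_two_pow_self (n := a)
              exact_mod_cast this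
            exact e3.trans (by gcongr)
    _ = (∏ p ∈ n.primeFactors, (if p < P then K else 1)) * ∏ p ∈ n.primeFactors, ((p : ℝ) ^ (n.factorization p)) ^ ε :=
        Finset.prod_mul_distrib
    _ ≤ _ := by
        gcongr

/-- number of divisors of `m` that are at most `E` -/
def dE (E m : ℕ) : ℕ := ((Icc 1 E).filter (fun q => q ∣ m)).card

lemma dE_moment (B : ℕ) (τ : ℝ) (hτ : 0 < τ) :
    ∃ C : ℝ, 0 < C ∧ ∀ E X : ℕ, 1 ≤ E →
      ∑ m ∈ Icc 1 X, (dE E m : ℝ) ^ (B + 1) ≤ C * X * (E : ℝ) ^ τ := by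
  set B' : ℕ := B + 1 with hB'
  have hBp : (0 : ℝ) < B' := by rw [hB']; positivity
  set δ : ℝ := τ / B' with hδ
  have hδ0 : 0 < δ := by positivity
  obtain ⟨C, hC1, hC⟩ := divisor_bound (δ / 2 / B') (by positivity)
  have hsum : Summable fun l : ℕ => (l : ℝ) ^ (-1 - δ / 2) := by
    rw [Real.summable_nat_rpow]; linarith
  set S := ∑' l : ℕ, (l : ℝ) ^ (-1 - δ / 2) with hS
  have hS0 : 0 ≤ S := tsum_nonneg fun l => by positivity
  refine ⟨C ^ B' * S + 1, by positivity, fun E X hE => ?_⟩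
  have hE1 : (1 : ℝ) ≤ E := by exact_mod_cast hE
  set Q : Finset (Fin B' → ℕ) := Fintype.piFinset (fun _ => Icc 1 E) with hQ
  have hQpos : ∀ q ∈ Q, ∀ i, 1 ≤ q i ∧ q i ≤ E := by
    intro q hq i
    rw [hQ, Fintype.mem_piFinset] at hq
    simpa using hq i
  have hl1 : ∀ q ∈ Q, univ.lcm q ≠ 0 := by
    intro q hq h0
    rw [Finset.lcm_eq_zero_iff] at h0
    obtain ⟨i, _, hi⟩ := h0
    have := (hQpos q hq i).1
    omega
  have hl2 : ∀ q ∈ Q, univ.lcm q ≤ E ^ B' := by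
    intro q hq
    have hd : univ.lcm q ∣ ∏ i, q i := Finset.lcm_dvd fun i hi => Finset.dvd_prod_of_mem q hi
    refine (Nat.le_of_dvd (Finset.prod_pos fun i _ => (hQpos q hq i).1) hd).trans ?_
    calc ∏ i, q i ≤ ∏ _i : Fin B', E := Finset.prod_le_prod' fun i _ => (hQpos q hq i).2
      _ = _ := by simp
  have h1 : ∀ m, (dE E m : ℝ) ^ B' = ∑ q ∈ Q, if univ.lcm q ∣ m then (1 : ℝ) else 0 := by
    intro m
    rw [Finset.sum_boole, dE]
    have : Q.filter (fun q => univ.lcm q ∣ m) = Fintype.piFinset (fun _ : Fin B' => (Icc 1 E).filter (fun q => q ∣ m)) := by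
      ext q
      simp only [hQ, mem_filter, Fintype.mem_piFinset, Finset.lcm_dvd_iff, mem_univ, true_imp_iff]
      exact forall_and.symm
    rw [this, Fintype.card_piFinset_const]
    push_cast; rfl
  have h2 : ∑ m ∈ Icc 1 X, (dE E m : ℝ) ^ B' ≤ ∑ q ∈ Q, (X : ℝ) * ((univ.lcm q : ℕ) : ℝ)⁻¹ := by
    simp_rw [h1]
    rw [Finset.sum_comm]
    refine Finset.sum_le_sum fun q hq => ?_
    rw [Finset.sum_boole]
    have : ((Icc 1 X).filter (fun m => univ.lcm q ∣ m)).card = X / univ.lcm q := by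
      have := Nat.Ioc_filter_dvd_card_eq_div X (univ.lcm q)
      rw [← this]; rfl
    rw [this, ← div_eq_mul_inv]
    exact Nat.cast_div_le
  refine h2.trans ?_
  rw [← Finset.mul_sum]
  have h3 : ∑ q ∈ Q, ((univ.lcm q : ℕ) : ℝ)⁻¹ ≤ C ^ B' * S * (E : ℝ) ^ τ := by
    rw [← Finset.sum_fiberwise_of_maps_to (t := Icc 1 (E ^ B')) (g := fun q => univ.lcm q)
      (fun q hq => by rw [mem_Icc]; exact ⟨Nat.one_le_iff_ne_zero.2 (hl1 q hq), hl2 q hq⟩)]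
    have h4 : ∀ l ∈ Icc 1 (E ^ B'), ∑ q ∈ Q with univ.lcm q = l, ((univ.lcm q : ℕ) : ℝ)⁻¹ ≤
        C ^ B' * (E : ℝ) ^ τ * (l : ℝ) ^ (-1 - δ / 2) := by
      intro l hl
      rw [mem_Icc] at hl
      have hl0 : (0 : ℝ) < l := by exact_mod_cast hl.1
      have h5 : ∑ q ∈ Q with univ.lcm q = l, ((univ.lcm q : ℕ) : ℝ)⁻¹ = (Q.filter (fun q => univ.lcm q = l)).card * (l : ℝ)⁻¹ := by
        rw [← nsmul_eq_mul, ← Finset.sum_const]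
        refine Finset.sum_congr rfl fun q hq => ?_
        rw [(mem_filter.1 hq).2]
      have h6 : (Q.filter (fun q => univ.lcm q = l)).card ≤ l.divisors.card ^ B' := by
        rw [← Fintype.card_piFinset_const]
        apply Finset.card_le_card
        intro q hq
        rw [Fintype.mem_piFinset]
        intro i
        rw [Nat.mem_divisors]
        refine ⟨?_, by omega⟩
        rw [← (mem_filter.1 hq).2]
        exact Finset.dvd_lcm (mem_univ i)
      have h7 : ((Q.filter (fun q => univ.lcm q = l)).card : ℝ) ≤ C ^ B' * (l : ℝ) ^ (δ / 2) := by
        calc ((Q.filter (fun q => univ.lcm q = l)).card : ℝ) ≤ (l.divisors.card : ℝ) ^ B' := by exact_mod_cast h6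
          _ ≤ (C * (l : ℝ) ^ (δ / 2 / B')) ^ B' := by gcongr; exact hC l (by omega)
          _ = _ := by
            rw [mul_pow, ← Real.rpow_natCast (_ ^ _) B', ← Real.rpow_mul hl0.le, div_mul_cancel₀ _ hBp.ne']
      rw [h5]
      have h8 : (l : ℝ) ^ δ ≤ (E : ℝ) ^ τ := by
        have : (l : ℝ) ≤ (E : ℝ) ^ B' := by exact_mod_cast hl.2
        calc (l : ℝ) ^ δ ≤ ((E : ℝ) ^ B') ^ δ := by gcongr
          _ = _ := by
            rw [← Real.rpow_natCast, ← Real.rpow_mul (by positivity), hδ, mul_div_cancel₀ _ hBp.ne']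
      calc ((Q.filter (fun q => univ.lcm q = l)).card : ℝ) * (l : ℝ)⁻¹ ≤ C ^ B' * (l : ℝ) ^ (δ / 2) * (l : ℝ)⁻¹ := by gcongr
        _ = C ^ B' * (l : ℝ) ^ δ * (l : ℝ) ^ (-1 - δ / 2) := by
          rw [mul_assoc, mul_assoc, ← Real.rpow_neg_one, ← Real.rpow_add hl0, ← Real.rpow_add hl0]
          congr 2; ring
        _ ≤ _ := by gcongr
    calc _ ≤ ∑ l ∈ Icc 1 (E ^ B'), C ^ B' * (E : ℝ) ^ τ * (l : ℝ) ^ (-1 - δ / 2) := Finset.sum_le_sum h4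
      _ = C ^ B' * (E : ℝ) ^ τ * ∑ l ∈ Icc 1 (E ^ B'), (l : ℝ) ^ (-1 - δ / 2) := by rw [Finset.mul_sum]
      _ ≤ C ^ B' * (E : ℝ) ^ τ * S := by
          gcongr
          exact hsum.sum_le_tsum _ fun i _ => by positivity
      _ = _ := by ring
  calc (X : ℝ) * ∑ q ∈ Q, ((univ.lcm q : ℕ) : ℝ)⁻¹ ≤ X * (C ^ B' * S * (E : ℝ) ^ τ) := by gcongr
    _ ≤ _ := by
      have : 0 ≤ (X : ℝ) * (E : ℝ) ^ τ := by positivity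
      nlinarith

/-! ## Lattice counting -/

/-- The set of `u` with `|u| ≤ 16 N` for which `u θ` is within `1/N` of an integer. -/
def nearS (N : ℕ) (θ : ℝ) : Finset ℤ :=
  (Icc (-(16 * N : ℤ)) (16 * N)).filter (fun u : ℤ => |u * θ - round (u * θ)| ≤ 1 / N)

lemma card_fiber_le (S : Finset ℤ) (q : ℤ) (X : ℝ) (hX : 1 ≤ X)
    (h : ∀ u ∈ S, ∀ v ∈ S, ∃ k : ℤ, u = v + k * q ∧ |(k : ℝ)| ≤ X) : (S.card : ℝ) ≤ 3 * X := by
  rcases S.eq_empty_or_nonempty with rfl | ⟨v, hv⟩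
  · simp; linarith
  have hsub : S ⊆ (Icc (-⌊X⌋) ⌊X⌋).image (fun k => v + k * q) := by
    intro u hu
    obtain ⟨k, hk, hk2⟩ := h u hu v hv
    rw [mem_image]
    refine ⟨k, ?_, hk.symm⟩
    have := abs_le.1 hk2
    rw [mem_Icc]
    refine ⟨?_, Int.le_floor.2 this.2⟩
    have : -k ≤ ⌊X⌋ := Int.le_floor.2 (by push_cast; linarith)
    linarith
  have h1 := (card_le_card hsub).trans card_image_le
  rw [Int.card_Icc] at h1
  have h0 : (0 : ℤ) ≤ ⌊X⌋ := Int.floor_nonneg.2 (by linarith)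
  have h2 : (S.card : ℤ) ≤ 2 * ⌊X⌋ + 1 := by omega
  have h3 : (S.card : ℝ) ≤ 2 * ⌊X⌋ + 1 := by exact_mod_cast h2
  have := Int.floor_le X
  linarith

lemma lattice_count (N E : ℕ) (hE : 1 ≤ E) (hEN : E ≤ N) (θ : ℝ)
    (h : ∀ q : ℕ, 1 ≤ q → q ≤ E → ∀ a : ℤ, (E : ℝ) / N ^ 2 < |q * θ - a|) :
    ((nearS N θ).card : ℝ) ≤ 3360 * (N / E) := by
  have hN : 0 < N := by omega
  have hNr : (0 : ℝ) < N := by exact_mod_cast hN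
  have hEr : (0 : ℝ) < E := by exact_mod_cast hE
  have hEN' : (E : ℝ) ≤ N := by exact_mod_cast hEN
  obtain ⟨r, hr1, hr2⟩ := Real.exists_rat_abs_sub_le_and_den_le θ hN
  set q : ℕ := r.den with hq
  set a : ℤ := r.num with ha
  have hq0 : 0 < q := r.den_pos
  have hqr : (0 : ℝ) < q := by exact_mod_cast hq0
  have hqN : (q : ℝ) ≤ N := by exact_mod_cast hr2
  have hcop : IsCoprime a (q : ℤ) := by
    rw [Int.isCoprime_iff_gcd_eq_one]
    exact r.reduced
  have hrr : (r : ℝ) = a / q := by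
    rw [hq, ha]; exact Rat.cast_def r
  have hd : |q * θ - a| ≤ 1 / N := by
    have e : q * θ - a = q * (θ - r) := by rw [hrr]; field_simp
    rw [e, abs_mul, abs_of_pos hqr]
    calc (q : ℝ) * |θ - r| ≤ q * (1 / ((N + 1) * q)) := by gcongr
      _ = 1 / (N + 1) := by field_simp
      _ ≤ 1 / N := by gcongr; linarith
  set t : ℤ → ℤ := fun u => u * a - q * round (u * θ) with ht
  have hmem : ∀ u ∈ nearS N θ, |(u : ℝ)| ≤ 16 * N ∧ |u * θ - round (u * θ)| ≤ 1 / N := by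
    intro u hu
    rw [nearS, mem_filter, mem_Icc] at hu
    refine ⟨?_, hu.2⟩
    rw [abs_le]
    exact ⟨by exact_mod_cast hu.1.1, by exact_mod_cast hu.1.2⟩
  have hmaps : ∀ u ∈ nearS N θ, t u ∈ Icc (-17 : ℤ) 17 := by
    intro u hu
    obtain ⟨h1, h2⟩ := hmem u hu
    have e : (t u : ℝ) = -(u * (q * θ - a)) + q * (u * θ - round (u * θ)) := by
      rw [ht]; push_cast; ring
    have : |(t u : ℝ)| ≤ 17 := by
      rw [e]
      calc _ ≤ |-(u * (q * θ - a))| + |q * (u * θ - round (u * θ))| := abs_add_le _ _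
        _ = |(u : ℝ)| * |q * θ - a| + q * |u * θ - round (u * θ)| := by
            rw [abs_neg, abs_mul, abs_mul (q : ℝ), abs_of_pos hqr]
        _ ≤ (16 * N) * (1 / N) + N * (1 / N) := by gcongr
        _ = 17 := by field_simp; norm_num
    rw [mem_Icc]
    have h3 := abs_le.1 this
    exact ⟨by exact_mod_cast h3.1, by exact_mod_cast h3.2⟩
  have hfib : ∀ b ∈ Icc (-17 : ℤ) 17,
      (((nearS N θ).filter (fun u => t u = b)).card : ℝ) ≤ 96 * (N / E) := by
    intro b _
    have := card_fiber_le ((nearS N θ).filter (fun u => t u = b)) q (32 * (N / E)) (by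
      have : 1 ≤ (N : ℝ) / E := by rw [le_div_iff₀ hEr]; linarith
      linarith) ?_
    · linarith
    intro u hu v hv
    rw [mem_filter] at hu hv
    obtain ⟨hu1, hu2⟩ := hmem u hu.1
    obtain ⟨hv1, hv2⟩ := hmem v hv.1
    have heq : (u - v) * a = q * (round (u * θ) - round (v * θ)) := by
      have := hu.2.trans hv.2.symm
      rw [ht] at this
      simp only at this
      linarith
    have hdvd : (q : ℤ) ∣ u - v :=
      hcop.symm.dvd_of_dvd_mul_right (Dvd.intro _ heq.symm)
    obtain ⟨k, hk⟩ := hdvd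
    refine ⟨k, by linarith, ?_⟩
    have hk2 : round (u * θ) - round (v * θ) = k * a := by
      rw [hk] at heq
      have : (q : ℤ) ≠ 0 := by exact_mod_cast hq0.ne'
      apply mul_left_cancel₀ this
      rw [← heq]; ring
    have hkr : (u : ℝ) - v = q * k := by exact_mod_cast hk
    have hk2r : ((round (u * θ) : ℤ) : ℝ) - (round (v * θ) : ℤ) = k * a := by exact_mod_cast hk2
    rw [mul_div_assoc', le_div_iff₀ hEr]
    by_cases hqE : q ≤ E
    · have h3 := h q hq0 hqE a
      have e : (k : ℝ) * (q * θ - a) = (u * θ - round (u * θ)) - (v * θ - round (v * θ)) := by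
        linear_combination (-θ) * hkr + hk2r
      have h4 : |(k : ℝ)| * |q * θ - a| ≤ 2 / N := by
        rw [← abs_mul, e]
        refine (abs_sub _ _).trans ?_
        calc _ ≤ 1 / (N : ℝ) + 1 / N := add_le_add hu2 hv2
          _ = 2 / N := by ring
      have h5 : |(k : ℝ)| * (E / N ^ 2) ≤ 2 / N := le_trans (by gcongr) h4
      have h6 : |(k : ℝ)| * E ≤ 2 * N := by
        have := mul_le_mul_of_nonneg_right h5 (sq_nonneg (N : ℝ))
        have e1 : |(k : ℝ)| * (E / N ^ 2) * (N : ℝ) ^ 2 = |(k : ℝ)| * E := by field_simp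
        have e2 : 2 / (N : ℝ) * N ^ 2 = 2 * N := by field_simp
        rw [e1, e2] at this
        exact this
      linarith
    · push Not at hqE
      have hqE' : (E : ℝ) ≤ q := by exact_mod_cast hqE.le
      have : |(k : ℝ)| * q ≤ 32 * N := by
        have e : |(k : ℝ)| * q = |(u : ℝ) - v| := by
          rw [hkr, abs_mul, abs_of_pos hqr, mul_comm]
        rw [e]
        refine (abs_sub _ _).trans ?_
        linarith
      refine le_trans ?_ this
      gcongr
  have := card_eq_sum_card_fiberwise hmaps
  rw [this]
  push_cast
  calc _ ≤ ∑ b ∈ Icc (-17 : ℤ) 17, 96 * ((N : ℝ) / E) := sum_le_sum hfib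
    _ = 3360 * (N / E) := by
      rw [sum_const]
      simp
      ring

/-! ## The weight -/

/-- tent weight -/
def tent (N : ℕ) (y : ℤ) : ℤ := max 0 (2 * N - |y|)

/-- the additive character -/
def ee (t : ℝ) : ℂ := Complex.exp (2 * Real.pi * Complex.I * t)

lemma ee_add (s t : ℝ) : ee (s + t) = ee s * ee t := by
  rw [ee, ee, ee, ← Complex.exp_add]; push_cast; ring_nf

@[simp] lemma ee_zero : ee 0 = 1 := by simp [ee]

lemma ee_norm (t : ℝ) : ‖ee t‖ = 1 := by
  have : ee t = Complex.exp (((2 * Real.pi * t : ℝ) : ℂ) * Complex.I) := by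
    rw [ee]; push_cast; ring_nf
  rw [this, Complex.norm_exp_ofReal_mul_I]

lemma ee_neg (t : ℝ) : ee (-t) = starRingEnd ℂ (ee t) := by
  rw [ee, ee, ← Complex.exp_conj]
  congr 1
  simp [Complex.conj_ofNat]

lemma ee_int (k : ℤ) : ee k = 1 := by
  rw [ee, Complex.exp_eq_one_iff]
  exact ⟨k, by push_cast; ring⟩

lemma ee_sub_int (t : ℝ) (k : ℤ) : ee (t - k) = ee t := by
  have := ee_add (t - k) k
  rw [ee_int, mul_one, sub_add_cancel] at this
  exact this.symm

lemma ee_sub_one_norm (t : ℝ) : ‖ee t - 1‖ = 2 * |Real.sin (Real.pi * t)| := by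
  have : ee t = Complex.exp (Complex.I * ((2 * Real.pi * t : ℝ) : ℂ)) := by
    rw [ee]; push_cast; ring_nf
  rw [this, Complex.norm_exp_I_mul_ofReal_sub_one]
  rw [norm_mul, Real.norm_eq_abs, Real.norm_eq_abs]
  norm_num
  congr 2
  ring

lemma ee_sub_one_lower (t : ℝ) : 4 * |t - round t| ≤ ‖ee t - 1‖ := by
  have h : ee t = ee (t - round t) := (ee_sub_int _ _).symm
  rw [h, ee_sub_one_norm]
  set s := t - round t with hs
  have hs2 : |s| ≤ 1 / 2 := abs_sub_round t
  have := Real.mul_abs_le_abs_sin (x := Real.pi * s) (by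
    rw [abs_mul, abs_of_pos Real.pi_pos]
    have := Real.pi_pos
    nlinarith)
  rw [abs_mul, abs_of_pos Real.pi_pos] at this
  have e : 2 / Real.pi * (Real.pi * |s|) = 2 * |s| := by
    have := Real.pi_pos.ne'
    field_simp
  linarith

lemma tent_nonneg (N : ℕ) (y : ℤ) : 0 ≤ tent N y := by unfold tent; simp only [abs_eq_max_neg] at *; omega
lemma tent_le (N : ℕ) (y : ℤ) : tent N y ≤ 2 * N := by unfold tent; simp only [abs_eq_max_neg] at *; omega
lemma tent_ge (N : ℕ) (y : ℤ) (h : |y| ≤ N) : N ≤ tent N y := by unfold tent; simp only [abs_eq_max_neg] at *; omega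
lemma tent_zero (N : ℕ) (y : ℤ) (h : 2 * (N : ℤ) ≤ |y|) : tent N y = 0 := by unfold tent; simp only [abs_eq_max_neg] at *; omega
lemma tent_diff (N : ℕ) (y : ℤ) : |tent N (y + 1) - tent N y| ≤ 1 := by
  unfold tent; simp only [abs_eq_max_neg] at *; omega
lemma tent_diff2 (N : ℕ) (y : ℤ) : |tent N (y + 1) - 2 * tent N y + tent N (y - 1)| ≤ 
    if y = 0 ∨ y = 2 * N ∨ y = - (2 * N) then 2 else 0 := by
  unfold tent; simp only [abs_eq_max_neg] at *
  split_ifs <;> omega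

/-! ## The Weyl sum -/

lemma sum_eq_tsum_of_supp (L : ℤ) (g : ℤ → ℂ) (h : ∀ y, L < |y| → g y = 0) :
    ∑ y ∈ Icc (-L) L, g y = ∑' y, g y := by
  rw [tsum_eq_sum]
  intro y hy
  apply h
  by_contra hc
  push Not at hc
  exact hy (mem_Icc.2 (abs_le.1 hc))

lemma sum_shift (L : ℤ) (g : ℤ → ℂ) (h : ∀ y, L ≤ |y| → g y = 0) :
    ∑ y ∈ Icc (-L) L, g (y + 1) = ∑ y ∈ Icc (-L) L, g y := by
  rw [sum_eq_tsum_of_supp L g (fun y hy => h y hy.le),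
    sum_eq_tsum_of_supp L (fun y => g (y + 1))]
  · exact (Equiv.addRight (1 : ℤ)).tsum_eq g
  · intro y hy
    apply h
    rw [abs_eq_max_neg] at *
    omega

lemma sum_shift_gen (L L' u : ℤ) (g : ℤ → ℂ) (h : ∀ y, L < |y| → g y = 0) (hu : L + |u| ≤ L') :
    ∑ y ∈ Icc (-L') L', g (u + y) = ∑ y ∈ Icc (-L) L, g y := by
  rw [sum_eq_tsum_of_supp L g h, sum_eq_tsum_of_supp L' (fun y => g (u + y))]
  · exact (Equiv.addLeft u).tsum_eq g
  · intro y hy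
    apply h
    rw [abs_eq_max_neg] at *
    omega

lemma second_diff_bound (L : ℤ) (a : ℤ → ℝ) (h : ∀ y, L ≤ |y| → a y = 0) (φ : ℝ) :
    ‖ee φ - 1‖ ^ 2 * ‖∑ y ∈ Icc (-L) L, (a y : ℂ) * ee (y * φ)‖ ≤
      ∑ y ∈ Icc (-L) L, |a (y + 1) - 2 * a y + a (y - 1)| := by
  set S := ∑ y ∈ Icc (-L) L, (a y : ℂ) * ee (y * φ) with hS
  have h1 : ∑ y ∈ Icc (-L) L, (a (y + 1) : ℂ) * ee ((y + 1 : ℤ) * φ) = S :=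
    sum_shift L (fun y => (a y : ℂ) * ee (y * φ)) (fun y hy => by simp [h y hy])
  have h2 : ∑ y ∈ Icc (-L) L, (a (y - 1) : ℂ) * ee ((y - 1 : ℤ) * φ) = S := by
    rw [hS]
    have := sum_shift L (fun y => (a (-y) : ℂ) * ee ((-y : ℤ) * φ)) (fun y hy => by simp [h (-y) (by rwa [abs_neg])])
    have hneg : ∀ g : ℤ → ℂ, ∑ y ∈ Icc (-L) L, g (-y) = ∑ y ∈ Icc (-L) L, g y := by
      intro g
      refine sum_nbij' (fun y => -y) (fun y => -y) ?_ ?_ ?_ ?_ ?_ <;> simp <;> intros <;> omega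
    rw [hneg (fun y => (a y : ℂ) * ee (y * φ)), ← hneg] at this
    rw [← this]
    refine sum_congr rfl fun y _ => ?_
    have e : -(-y + 1) = y - 1 := by ring
    rw [e]
  have hu : ‖ee φ - 1‖ ^ 2 = ‖ee (-φ) - 2 + ee φ‖ := by
    have : ee φ * ee (-φ) = 1 := by rw [← ee_add, add_neg_cancel, ee_zero]
    have e : (ee φ - 1) ^ 2 = ee φ * (ee (-φ) - 2 + ee φ) := by
      linear_combination (-1) * this
    rw [← norm_pow, e, norm_mul, ee_norm, one_mul]
  rw [hu, ← norm_mul]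
  have : (ee (-φ) - 2 + ee φ) * S =
      ∑ y ∈ Icc (-L) L, ((a (y + 1) - 2 * a y + a (y - 1) : ℝ) : ℂ) * ee (y * φ) := by
    have e1 : ee (-φ) * S = ∑ y ∈ Icc (-L) L, (a (y + 1) : ℂ) * ee (y * φ) := by
      rw [← h1, mul_sum]
      refine sum_congr rfl fun y _ => ?_
      have : ((y + 1 : ℤ) : ℝ) * φ = y * φ + φ := by push_cast; ring
      rw [this, ee_add]
      have : ee φ * ee (-φ) = 1 := by rw [← ee_add, add_neg_cancel, ee_zero]
      linear_combination (a (y + 1) : ℂ) * ee (y * φ) * this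
    have e2 : ee φ * S = ∑ y ∈ Icc (-L) L, (a (y - 1) : ℂ) * ee (y * φ) := by
      rw [← h2, mul_sum]
      refine sum_congr rfl fun y _ => ?_
      have : ((y - 1 : ℤ) : ℝ) * φ = y * φ + -φ := by push_cast; ring
      rw [this, ee_add]
      have : ee φ * ee (-φ) = 1 := by rw [← ee_add, add_neg_cancel, ee_zero]
      linear_combination (a (y - 1) : ℂ) * ee (y * φ) * this
    have e3 : (ee (-φ) - 2 + ee φ) * S = ee (-φ) * S - 2 * S + ee φ * S := by ring
    rw [e3, e1, e2, hS, mul_sum, ← sum_sub_distrib, ← sum_add_distrib]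
    refine sum_congr rfl fun y _ => ?_
    push_cast
    ring
  rw [this]
  refine (norm_sum_le _ _).trans (sum_le_sum fun y _ => ?_)
  rw [norm_mul, ee_norm, mul_one, Complex.norm_real, Real.norm_eq_abs]

/-- Weighted Weyl sum. -/
def KK (N : ℕ) (θ : ℝ) : ℂ :=
  ∑ y ∈ Icc (-(2 * N : ℤ)) (2 * N), ((tent N y : ℝ) : ℂ) * ee ((y : ℝ) ^ 2 * θ)

/-- differenced sum -/
def SS (N : ℕ) (θ : ℝ) (u : ℤ) : ℂ :=
  ∑ y ∈ Icc (-(2 * N : ℤ)) (2 * N), ((tent N y * tent N (y + u) : ℝ) : ℂ) * ee (y * (2 * u * θ))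

lemma KK_sq (N : ℕ) (θ : ℝ) : ‖KK N θ‖ ^ 2 ≤ ∑ u ∈ Icc (-(4 * N : ℤ)) (4 * N), ‖SS N θ u‖ := by
  have e : KK N θ * starRingEnd ℂ (KK N θ) =
      ∑ u ∈ Icc (-(4 * N : ℤ)) (4 * N), ee ((u : ℝ) ^ 2 * θ) * SS N θ u := by
    have e1 : ∀ y ∈ Icc (-(2 * N : ℤ)) (2 * N), KK N θ =
        ∑ u ∈ Icc (-(4 * N : ℤ)) (4 * N), ((tent N (y + u) : ℝ) : ℂ) * ee (((y + u : ℤ) : ℝ) ^ 2 * θ) := by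
      intro y hy
      rw [KK]
      refine (sum_shift_gen (2 * N) (4 * N) y (fun y => ((tent N y : ℝ) : ℂ) * ee ((y : ℝ) ^ 2 * θ)) ?_ ?_).symm
      · intro z hz
        rw [tent_zero N z hz.le]; simp
      · rw [mem_Icc] at hy
        have := abs_le.2 hy
        linarith
    have hc : starRingEnd ℂ (KK N θ) = ∑ y ∈ Icc (-(2 * N : ℤ)) (2 * N),
        starRingEnd ℂ (((tent N y : ℝ) : ℂ) * ee ((y : ℝ) ^ 2 * θ)) := by rw [KK, map_sum]
    rw [hc, mul_sum, sum_congr rfl (fun y hy => by rw [e1 y hy, sum_mul]), sum_comm]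
    refine sum_congr rfl fun u _ => ?_
    rw [SS, mul_sum]
    refine sum_congr rfl fun y _ => ?_
    rw [map_mul, ← ee_neg, Complex.conj_ofReal]
    have : ee (-((y : ℝ) ^ 2 * θ)) * ee (((y + u : ℤ) : ℝ) ^ 2 * θ) = ee ((u : ℝ) ^ 2 * θ) * ee (y * (2 * u * θ)) := by
      rw [← ee_add, ← ee_add]
      congr 1
      push_cast
      ring
    push_cast at this ⊢
    linear_combination ((tent N y : ℂ) * (tent N (y + u) : ℂ)) * this
  have : ‖KK N θ‖ ^ 2 = ‖KK N θ * starRingEnd ℂ (KK N θ)‖ := by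
    rw [norm_mul, RCLike.norm_conj, sq]
  rw [this, e]
  refine (norm_sum_le _ _).trans (sum_le_sum fun u _ => ?_)
  rw [norm_mul, ee_norm, one_mul]

/-- bound for second differences of the tent -/
def D2 (N : ℕ) (y : ℤ) : ℤ := if y = 0 ∨ y = 2 * N ∨ y = - (2 * N) then 2 else 0

lemma sum_D2 (N : ℕ) (s : Finset ℤ) (u : ℤ) : ∑ y ∈ s, D2 N (y + u) ≤ 6 := by
  have h1 : ∀ y, D2 N (y + u) ≤ (if y = -u then 2 else 0) + (if y = 2 * N - u then 2 else 0) + (if y = -(2 * N) - u then 2 else 0) := by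
    intro y
    unfold D2
    split_ifs <;> omega
  refine (sum_le_sum fun y _ => h1 y).trans ?_
  rw [sum_add_distrib, sum_add_distrib, sum_ite_eq', sum_ite_eq', sum_ite_eq']
  split_ifs <;> norm_num

lemma prod_diff2 (N : ℕ) (u y : ℤ) :
    |tent N (y + 1) * tent N (y + 1 + u) - 2 * (tent N y * tent N (y + u)) + tent N (y - 1) * tent N (y - 1 + u)|
      ≤ 2 * N * D2 N y + 2 * N * D2 N (y + u) + 2 := by
  have a2 := tent_diff2 N y
  have b2 := tent_diff2 N (y + u)
  have a1 := tent_diff N y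
  have a0 := tent_diff N (y - 1)
  have b1 := tent_diff N (y + u)
  have b0 := tent_diff N (y - 1 + u)
  have ay := tent_le N y
  have byu := tent_le N (y + u)
  have ay0 := tent_nonneg N y
  have byu0 := tent_nonneg N (y + u)
  rw [show y - 1 + 1 = y by ring] at a0
  rw [show y - 1 + u + 1 = y + u by ring] at b0
  rw [show y + u + 1 = y + 1 + u by ring] at b1 b2
  rw [show y + u - 1 = y - 1 + u by ring] at b2
  generalize tent N (y + 1) = A2 at *
  generalize tent N (y + 1 + u) = B2 at *
  generalize tent N (y - 1) = A0 at *
  generalize tent N (y - 1 + u) = B0 at *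
  generalize tent N y = A1 at *
  generalize tent N (y + u) = B1 at *
  have e : A2 * B2 - 2 * (A1 * B1) + A0 * B0 =
      B1 * (A2 - 2 * A1 + A0) + A1 * (B2 - 2 * B1 + B0) + (A2 - A1) * (B2 - B1) + (A1 - A0) * (B1 - B0) := by ring
  rw [e]
  have f1 : |B1 * (A2 - 2 * A1 + A0)| ≤ 2 * N * D2 N y := by
    rw [abs_mul, abs_of_nonneg byu0]
    exact mul_le_mul byu a2 (abs_nonneg _) (by positivity)
  have f2 : |A1 * (B2 - 2 * B1 + B0)| ≤ 2 * N * D2 N (y + u) := by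
    rw [abs_mul, abs_of_nonneg ay0]
    exact mul_le_mul ay b2 (abs_nonneg _) (by positivity)
  have f3 : |(A2 - A1) * (B2 - B1)| ≤ 1 := by
    rw [abs_mul]; exact mul_le_one₀ a1 (abs_nonneg _) b1
  have f4 : |(A1 - A0) * (B1 - B0)| ≤ 1 := by
    rw [abs_mul]; exact mul_le_one₀ a0 (abs_nonneg _) b0
  refine (abs_add_le _ _).trans ?_
  have g1 := abs_add_le (B1 * (A2 - 2 * A1 + A0) + A1 * (B2 - 2 * B1 + B0)) ((A2 - A1) * (B2 - B1))
  have g2 := abs_add_le (B1 * (A2 - 2 * A1 + A0)) (A1 * (B2 - 2 * B1 + B0))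
  linarith

lemma SS_bound1 (N : ℕ) (hN : 1 ≤ N) (θ : ℝ) (u : ℤ) : ‖SS N θ u‖ ≤ 20 * (N : ℝ) ^ 3 := by
  have hNr : (1 : ℝ) ≤ N := by exact_mod_cast hN
  rw [SS]
  calc _ ≤ ∑ y ∈ Icc (-(2 * N : ℤ)) (2 * N), (4 * (N : ℝ) ^ 2) := by
        refine (norm_sum_le _ _).trans (sum_le_sum fun y _ => ?_)
        rw [norm_mul, ee_norm, mul_one, Complex.norm_real, Real.norm_eq_abs, abs_mul]
        have h1 : |(tent N y : ℝ)| ≤ 2 * N := by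
          rw [abs_of_nonneg (by exact_mod_cast tent_nonneg N y)]; exact_mod_cast tent_le N y
        have h2 : |(tent N (y + u) : ℝ)| ≤ 2 * N := by
          rw [abs_of_nonneg (by exact_mod_cast tent_nonneg N _)]; exact_mod_cast tent_le N _
        calc _ ≤ (2 * (N : ℝ)) * (2 * N) := by gcongr
          _ = _ := by ring
    _ = (4 * N + 1) * (4 * (N : ℝ) ^ 2) := by
        rw [sum_const, Int.card_Icc, nsmul_eq_mul]
        congr 1
        have : ((2 * (N : ℤ) + 1 - -(2 * N)).toNat : ℤ) = 4 * N + 1 := by omega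
        exact_mod_cast this
    _ ≤ _ := by nlinarith [sq_nonneg (N : ℝ)]

lemma SS_bound2 (N : ℕ) (hN : 1 ≤ N) (θ : ℝ) (u : ℤ) :
    16 * (2 * u * θ - round (2 * u * θ)) ^ 2 * ‖SS N θ u‖ ≤ 34 * N := by
  have h := second_diff_bound (2 * N) (fun y => (tent N y * tent N (y + u) : ℝ)) (fun y hy => by
    rw [tent_zero N y hy]; simp) (2 * u * θ)
  have h1 : ∑ y ∈ Icc (-(2 * N : ℤ)) (2 * N), |(tent N (y + 1) * tent N (y + 1 + u) : ℝ) - 2 * (tent N y * tent N (y + u) : ℝ) + (tent N (y - 1) * tent N (y - 1 + u) : ℝ)| ≤ 34 * N := by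
    have : ∑ y ∈ Icc (-(2 * N : ℤ)) (2 * N), |tent N (y + 1) * tent N (y + 1 + u) - 2 * (tent N y * tent N (y + u)) + tent N (y - 1) * tent N (y - 1 + u)| ≤ 34 * N := by
      refine (sum_le_sum fun y _ => prod_diff2 N u y).trans ?_
      rw [sum_add_distrib, sum_add_distrib, ← mul_sum, ← mul_sum]
      have s1 := sum_D2 N (Icc (-(2 * N : ℤ)) (2 * N)) 0
      have s2 := sum_D2 N (Icc (-(2 * N : ℤ)) (2 * N)) u
      simp only [add_zero] at s1
      rw [sum_const, Int.card_Icc, nsmul_eq_mul]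
      have : ((2 * (N : ℤ) + 1 - -(2 * N)).toNat : ℤ) = 4 * N + 1 := by omega
      rw [this]
      have hN' : (1 : ℤ) ≤ N := by exact_mod_cast hN
      nlinarith
    exact_mod_cast this
  refine le_trans ?_ (h.trans h1)
  rw [SS]
  refine mul_le_mul_of_nonneg_right ?_ (norm_nonneg _)
  have := ee_sub_one_lower (2 * u * θ)
  calc 16 * (2 * u * θ - round (2 * u * θ)) ^ 2 = (4 * |2 * u * θ - round (2 * u * θ)|) ^ 2 := by
        rw [mul_pow, sq_abs]; norm_num
    _ ≤ _ := by gcongr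

/-- index of residue -/
def kap (N : ℕ) (θ : ℝ) (u : ℤ) : ℤ := ⌊N * (2 * u * θ - round (2 * u * θ))⌋

lemma SS_bound3 (N : ℕ) (hN : 1 ≤ N) (θ : ℝ) (u : ℤ) :
    ‖SS N θ u‖ ≤ 65 * (N : ℝ) ^ 3 * (1 / (1 + (kap N θ u : ℝ) ^ 2)) := by
  have h1 := SS_bound1 N hN θ u
  have h2 := SS_bound2 N hN θ u
  have hNr : (1 : ℝ) ≤ N := by exact_mod_cast hN
  rw [mul_one_div, le_div_iff₀ (by positivity)]
  set v := 2 * u * θ - round (2 * u * θ) with hv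
  have k1 : (kap N θ u : ℝ) ≤ N * v := Int.floor_le _
  have k2 : N * v < kap N θ u + 1 := Int.lt_floor_add_one _
  set k : ℝ := (kap N θ u : ℝ)
  have k3 : k ^ 2 ≤ 2 * (N * v) ^ 2 + 2 := by nlinarith [sq_nonneg (2 * (N * v) - k)]
  have h0 := norm_nonneg (SS N θ u)
  set s := ‖SS N θ u‖
  have h3 : (N : ℝ) ^ 2 * (16 * v ^ 2 * s) ≤ (N : ℝ) ^ 2 * (34 * N) := by gcongr
  have h4 : s * (1 + k ^ 2) ≤ s * (3 + 2 * (N * v) ^ 2) := mul_le_mul_of_nonneg_left (by linarith) h0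
  nlinarith

lemma fiber_kap (N : ℕ) (hN : 1 ≤ N) (θ : ℝ) (k : ℤ) :
    ((Icc (-(4 * N : ℤ)) (4 * N)).filter (fun u => kap N θ u = k)).card ≤ (nearS N θ).card := by
  have hNr : (0 : ℝ) < N := by exact_mod_cast hN
  rcases ((Icc (-(4 * N : ℤ)) (4 * N)).filter (fun u => kap N θ u = k)).eq_empty_or_nonempty with h | ⟨v, hv⟩
  · rw [h]; simp
  refine card_le_card_of_injOn (fun u => 2 * (u - v)) ?_ ?_
  · intro u hu
    simp only [coe_filter, Set.mem_ofPred_eq] at hu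
    rw [mem_filter] at hv
    rw [mem_coe, nearS, mem_filter]
    have hu1 := mem_Icc.1 hu.1
    have hv1 := mem_Icc.1 hv.1
    refine ⟨mem_Icc.2 ⟨by linarith, by linarith⟩, ?_⟩
    refine (round_le _ (round (2 * u * θ) - round (2 * v * θ))).trans ?_
    have a1 : (kap N θ u : ℝ) ≤ _ := Int.floor_le _
    have a2 : _ < (kap N θ u : ℝ) + 1 := Int.lt_floor_add_one _
    have b1 : (kap N θ v : ℝ) ≤ _ := Int.floor_le _
    have b2 : _ < (kap N θ v : ℝ) + 1 := Int.lt_floor_add_one _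
    rw [hu.2] at a1 a2
    rw [hv.2] at b1 b2
    rw [le_div_iff₀ hNr]
    have : |(((2 * (u - v) : ℤ) : ℝ) * θ - ((round (2 * u * θ) - round (2 * v * θ) : ℤ) : ℝ))| * N =
       |N * (2 * u * θ - round (2 * u * θ)) - N * (2 * v * θ - round (2 * v * θ))| := by
      rw [← abs_of_pos hNr, ← abs_mul, abs_of_pos hNr]
      congr 1
      push_cast
      ring
    rw [this, abs_le]
    constructor <;> linarith
  · intro u _ w _ h
    simp only at h
    linarith

lemma summable_one_add_sq : Summable (fun k : ℤ => 1 / (1 + (k : ℝ) ^ 2)) := by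
  have h := (Real.summable_one_div_int_pow (p := 2)).2 (by norm_num)
  have h2 : Summable (fun k : ℤ => 1 / (k : ℝ) ^ 2 + (if k = 0 then 1 else 0)) := by
    refine h.add ?_
    exact (hasSum_ite_eq (0 : ℤ) (1 : ℝ)).summable
  refine h2.of_nonneg_of_le (fun k => by positivity) (fun k => ?_)
  by_cases hk : k = 0
  · simp [hk]
  · simp only [hk, if_false, add_zero]
    have : (0 : ℝ) < (k : ℝ) ^ 2 := by positivity
    gcongr
    linarith

/-- Inverse Weyl theorem. -/
lemma weyl_inverse : ∃ C : ℝ, 1 ≤ C ∧ ∀ N E : ℕ, 1 ≤ E → E ≤ N → ∀ θ : ℝ,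
    C * (N : ℝ) ^ 4 / E < ‖KK N θ‖ ^ 2 →
    ∃ q : ℕ, 1 ≤ q ∧ q ≤ E ∧ ∃ a : ℤ, |q * θ - a| ≤ (E : ℝ) / N ^ 2 := by
  set c0 := ∑' k : ℤ, 1 / (1 + (k : ℝ) ^ 2) with hc0
  have hc00 : 0 ≤ c0 := tsum_nonneg fun k => by positivity
  refine ⟨65 * c0 * 3360 + 1, by linarith, ?_⟩
  intro N E hE hEN θ hK
  by_contra hc
  push Not at hc
  have hN : 1 ≤ N := by omega
  have hNr : (1 : ℝ) ≤ N := by exact_mod_cast hN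
  have hEr : (0 : ℝ) < E := by exact_mod_cast hE
  have hL := lattice_count N E hE hEN θ hc
  have h1 : ‖KK N θ‖ ^ 2 ≤ 65 * c0 * (N : ℝ) ^ 3 * (nearS N θ).card := by
    set s := Icc (-(4 * N : ℤ)) (4 * N) with hs
    calc ‖KK N θ‖ ^ 2 ≤ ∑ u ∈ s, ‖SS N θ u‖ := KK_sq N θ
      _ ≤ ∑ u ∈ s, 65 * (N : ℝ) ^ 3 * (1 / (1 + (kap N θ u : ℝ) ^ 2)) :=
          sum_le_sum fun u _ => SS_bound3 N hN θ u
      _ = ∑ k ∈ s.image (kap N θ), ∑ u ∈ s.filter (fun u => kap N θ u = k),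
            65 * (N : ℝ) ^ 3 * (1 / (1 + (kap N θ u : ℝ) ^ 2)) := by
          rw [sum_fiberwise_of_maps_to (fun u hu => mem_image_of_mem _ hu)]
      _ ≤ ∑ k ∈ s.image (kap N θ), (nearS N θ).card * (65 * (N : ℝ) ^ 3 * (1 / (1 + (k : ℝ) ^ 2))) := by
          refine sum_le_sum fun k _ => ?_
          rw [sum_congr rfl (g := fun _ => 65 * (N : ℝ) ^ 3 * (1 / (1 + (k : ℝ) ^ 2)))
            (fun u hu => by rw [(mem_filter.1 hu).2]), sum_const, nsmul_eq_mul]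
          have := fiber_kap N hN θ k
          gcongr
      _ = (nearS N θ).card * (65 * (N : ℝ) ^ 3) * ∑ k ∈ s.image (kap N θ), (1 / (1 + (k : ℝ) ^ 2)) := by
          rw [mul_sum]; refine sum_congr rfl fun k _ => by ring
      _ ≤ (nearS N θ).card * (65 * (N : ℝ) ^ 3) * c0 := by
          gcongr
          exact summable_one_add_sq.sum_le_tsum _ (fun k _ => by positivity)
      _ = _ := by ring
  have h2 : 65 * c0 * (N : ℝ) ^ 3 * (nearS N θ).card ≤ 65 * c0 * (N : ℝ) ^ 3 * (3360 * (N / E)) := by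
    gcongr
  have h3 : 65 * c0 * (N : ℝ) ^ 3 * (3360 * (N / E)) ≤ (65 * c0 * 3360 + 1) * (N : ℝ) ^ 4 / E := by
    have : 65 * c0 * (N : ℝ) ^ 3 * (3360 * (N / E)) = (65 * c0 * 3360) * (N : ℝ) ^ 4 / E := by ring
    rw [this]
    gcongr
    linarith
  linarith

/-! ## Orthogonality and Parseval -/

lemma ee_nat_mul (k : ℕ) (t : ℝ) : ee (k * t) = ee t ^ k := by
  rw [ee, ee, ← Complex.exp_nat_mul]
  congr 1
  push_cast
  ring

lemma ee_eq_one_iff (t : ℝ) : ee t = 1 ↔ ∃ k : ℤ, t = k := by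
  constructor
  · intro h
    have := ee_sub_one_lower t
    rw [h, sub_self, norm_zero] at this
    have h2 : |t - round t| = 0 := le_antisymm (by linarith) (abs_nonneg _)
    exact ⟨round t, by linarith [abs_eq_zero.1 h2]⟩
  · rintro ⟨k, rfl⟩
    exact ee_int k

lemma orth (M : ℕ) (hM : 0 < M) (m : ℤ) :
    ∑ j ∈ range M, ee (m * j / M) = if (M : ℤ) ∣ m then (M : ℂ) else 0 := by
  have hMr : (M : ℝ) ≠ 0 := by positivity
  have h1 : ∀ j : ℕ, ee (m * j / M) = ee (m / M) ^ j := by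
    intro j
    rw [← ee_nat_mul]
    congr 1
    ring
  simp_rw [h1]
  split_ifs with h
  · obtain ⟨k, rfl⟩ := h
    have : ee (((M : ℤ) * k : ℤ) / (M : ℝ)) = 1 := by
      rw [ee_eq_one_iff]
      exact ⟨k, by push_cast; field_simp⟩
    rw [this]
    simp
  · have hne : ee (m / M) ≠ 1 := by
      intro hc
      rw [ee_eq_one_iff] at hc
      obtain ⟨k, hk⟩ := hc
      apply h
      refine ⟨k, ?_⟩
      rw [div_eq_iff hMr] at hk
      have : m = k * M := by exact_mod_cast hk
      rw [this, mul_comm]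
    rw [geom_sum_eq hne, ← ee_nat_mul]
    have : ee (M * (m / M)) = 1 := by
      rw [ee_eq_one_iff]
      exact ⟨m, by field_simp⟩
    rw [this]
    simp

lemma parseval {ι : Type*} (M : ℕ) (hM : 0 < M) (S : Finset ι) (fr : ι → ℤ) (c : ι → ℂ)
    (hS : ∀ s ∈ S, ∀ t ∈ S, (M : ℤ) ∣ fr s - fr t → s = t) :
    ∑ j ∈ range M, ‖∑ s ∈ S, c s * ee (fr s * j / M)‖ ^ 2 = M * ∑ s ∈ S, ‖c s‖ ^ 2 := by
  classical
  have key : ∀ z : ℂ, ((‖z‖ ^ 2 : ℝ) : ℂ) = z * starRingEnd ℂ z := by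
    intro z
    rw [Complex.mul_conj, Complex.normSq_eq_norm_sq]
  have : ((∑ j ∈ range M, ‖∑ s ∈ S, c s * ee (fr s * j / M)‖ ^ 2 : ℝ) : ℂ) =
      ((M * ∑ s ∈ S, ‖c s‖ ^ 2 : ℝ) : ℂ) := by
    rw [Complex.ofReal_sum]
    simp_rw [key, map_sum, sum_mul_sum]
    rw [sum_comm]
    simp_rw [sum_comm (s := range M)]
    have h1 : ∀ s ∈ S, ∀ t ∈ S, ∑ j ∈ range M, c s * ee (fr s * j / M) * starRingEnd ℂ (c t * ee (fr t * j / M))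
        = if s = t then (M : ℂ) * (c s * starRingEnd ℂ (c s)) else 0 := by
      intro s hs t ht
      have : ∀ j ∈ range M, c s * ee (fr s * j / M) * starRingEnd ℂ (c t * ee (fr t * j / M)) =
          c s * starRingEnd ℂ (c t) * ee (((fr s - fr t : ℤ) : ℝ) * j / M) := by
        intro j _
        rw [map_mul, ← ee_neg]
        have : ee (((fr s - fr t : ℤ) : ℝ) * j / M) = ee (fr s * j / M) * ee (-(fr t * j / M)) := by
          rw [← ee_add]
          congr 1
          push_cast
          ring
        rw [this]
        ring
      rw [sum_congr rfl this, ← mul_sum, orth M hM]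
      by_cases hst : s = t
      · subst hst
        simp
        ring
      · rw [if_neg hst, if_neg (fun hd => hst (hS s hs t ht hd)), mul_zero]
    rw [sum_congr rfl fun s hs => sum_congr rfl fun t ht => h1 s hs t ht]
    simp only [sum_ite_eq]
    push_cast
    rw [mul_sum]
    refine sum_congr rfl fun s hs => ?_
    rw [if_pos hs, ← key]
    push_cast
    rfl
  exact_mod_cast this

/-! ## Counting pairs -/

/-- the exponential sum over a set of frequencies -/
def Uh (M : ℕ) (U : Finset ℕ) (m : ℕ) : ℂ := ∑ r ∈ U, ee (r * m / M)

lemma Uh_parseval (M : ℕ) (hM : 0 < M) (U : Finset ℕ) (hU : U ⊆ range M) :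
    ∑ m ∈ range M, ‖Uh M U m‖ ^ 2 = M * U.card := by
  have := parseval M hM U (fun r => (r : ℤ)) (fun _ => 1) (by
    intro s hs t ht hd
    have hs' := mem_range.1 (hU hs)
    have ht' := mem_range.1 (hU ht)
    have h3 : (s : ℤ) - t = 0 := by
      apply Int.eq_zero_of_abs_lt_dvd hd
      rw [abs_lt]; omega
    omega)
  simp only [one_mul, norm_one, one_pow, sum_const, nsmul_eq_mul, mul_one] at this
  rw [← this]
  simp [Uh]

lemma Uh_le (M : ℕ) (U : Finset ℕ) (m : ℕ) : ‖Uh M U m‖ ≤ U.card := by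
  rw [Uh]
  refine (norm_sum_le _ _).trans ?_
  simp [ee_norm]

lemma geom_lower (H : ℕ) (φ : ℝ) (h : (H : ℝ) * |φ - round φ| ≤ 1 / 16) :
    (H : ℝ) / 2 ≤ ‖∑ k ∈ range H, ee (k * φ)‖ := by
  set ψ := φ - round φ with hψ
  have e : ∀ k : ℕ, ee (k * φ) = ee (k * ψ) := by
    intro k
    rw [ee_nat_mul, ee_nat_mul, hψ, ee_sub_int]
  simp_rw [e]
  have h1 : ∀ k ∈ range H, ‖ee (k * ψ) - 1‖ ≤ 1 / 2 := by
    intro k hk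
    rw [ee_sub_one_norm]
    have h2 : |Real.sin (Real.pi * (k * ψ))| ≤ |Real.pi * (k * ψ)| := Real.abs_sin_le_abs
    have h3 : |Real.pi * (k * ψ)| = Real.pi * (k * |ψ|) := by
      rw [abs_mul, abs_mul, abs_of_pos Real.pi_pos, Nat.abs_cast]
    have h4 : (k : ℝ) * |ψ| ≤ 1 / 16 := by
      refine le_trans ?_ h
      have : (k : ℝ) ≤ H := by exact_mod_cast (mem_range.1 hk).le
      gcongr
    have := Real.pi_lt_four
    have := Real.pi_pos
    have h5 : Real.pi * (k * |ψ|) ≤ 4 * (1 / 16) := by gcongr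
    linarith
  have h2 : ‖(H : ℂ) - ∑ k ∈ range H, ee (k * ψ)‖ ≤ H / 2 := by
    have : (H : ℂ) - ∑ k ∈ range H, ee (k * ψ) = -∑ k ∈ range H, (ee (k * ψ) - 1) := by
      simp
    rw [this, norm_neg]
    refine (norm_sum_le _ _).trans ((sum_le_sum h1).trans ?_)
    simp
    linarith
  have h3 := norm_sub_norm_le (H : ℂ) (∑ k ∈ range H, ee (k * ψ))
  have h4 : ‖(H : ℂ)‖ = H := by simp
  linarith

lemma double_sum_le (H : ℕ) (g : ℕ → ℝ) (hg : ∀ k, 0 ≤ g k) :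
    ∑ h ∈ range H, ∑ h' ∈ range H, g (h - h' + (h' - h)) ≤ 2 * H * ∑ k ∈ range H, g k := by
  have : ∀ h ∈ range H, ∑ h' ∈ range H, g (h - h' + (h' - h)) ≤ 2 * ∑ k ∈ range H, g k := by
    intro h hh
    have hh' := mem_range.1 hh
    rw [← sum_filter_add_sum_filter_not (range H) (fun h' => h' ≤ h)]
    have a1 : ∑ h' ∈ (range H).filter (fun h' => h' ≤ h), g (h - h' + (h' - h)) ≤ ∑ k ∈ range H, g k := by
      rw [← sum_image (f := g) (g := fun h' => h - h' + (h' - h))]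
      · refine sum_le_sum_of_subset_of_nonneg ?_ (fun _ _ _ => hg _)
        intro k hk
        simp only [mem_image, mem_filter, mem_range] at hk ⊢
        obtain ⟨a, ha, rfl⟩ := hk
        omega
      · intro a ha b hb hab
        simp only [coe_filter, mem_range, Set.mem_ofPred_eq] at ha hb hab
        omega
    have a2 : ∑ h' ∈ (range H).filter (fun h' => ¬ h' ≤ h), g (h - h' + (h' - h)) ≤ ∑ k ∈ range H, g k := by
      rw [← sum_image (f := g) (g := fun h' => h - h' + (h' - h))]
      · refine sum_le_sum_of_subset_of_nonneg ?_ (fun _ _ _ => hg _)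
        intro k hk
        simp only [mem_image, mem_filter, mem_range] at hk ⊢
        obtain ⟨a, ha, rfl⟩ := hk
        omega
      · intro a ha b hb hab
        simp only [coe_filter, mem_range, Set.mem_ofPred_eq] at ha hb hab
        omega
    linarith
  refine (sum_le_sum this).trans ?_
  rw [sum_const, card_range, nsmul_eq_mul]
  apply le_of_eq
  ring

lemma norm_conj_symm (M : ℕ) (U : Finset ℕ) (q h h' : ℕ) :
    ∑ r ∈ U, ∑ s ∈ U, ee (h * (q * (((r : ℝ) - s) / M))) * starRingEnd ℂ (ee (h' * (q * (((r : ℝ) - s) / M))))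
      = ((‖Uh M U ((h - h' + (h' - h)) * q)‖ ^ 2 : ℝ) : ℂ) := by
  have key : ((‖Uh M U ((h - h' + (h' - h)) * q)‖ ^ 2 : ℝ) : ℂ) =
      Uh M U ((h - h' + (h' - h)) * q) * starRingEnd ℂ (Uh M U ((h - h' + (h' - h)) * q)) := by
    rw [Complex.mul_conj, Complex.normSq_eq_norm_sq]
  rw [key, Uh, map_sum, sum_mul_sum]
  rcases le_total h' h with hh | hh
  · refine sum_congr rfl fun r _ => sum_congr rfl fun s _ => ?_
    rw [← ee_neg, ← ee_neg, ← ee_add, ← ee_add]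
    congr 1
    rw [Nat.sub_eq_zero_of_le hh, add_zero]
    push_cast [Nat.cast_sub hh]
    ring
  · rw [sum_comm]
    refine sum_congr rfl fun r _ => sum_congr rfl fun s _ => ?_
    rw [← ee_neg, ← ee_neg, ← ee_add, ← ee_add]
    congr 1
    rw [Nat.sub_eq_zero_of_le hh, zero_add]
    push_cast [Nat.cast_sub hh]
    ring

lemma sum_sq_expand (M : ℕ) (U : Finset ℕ) (q H : ℕ) :
    ∑ r ∈ U, ∑ s ∈ U, ‖∑ h ∈ range H, ee (h * (q * (((r : ℝ) - s) / M)))‖ ^ 2 =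
      ∑ h ∈ range H, ∑ h' ∈ range H, ‖Uh M U ((h - h' + (h' - h)) * q)‖ ^ 2 := by
  have key : ∀ z : ℂ, ((‖z‖ ^ 2 : ℝ) : ℂ) = z * starRingEnd ℂ z := by
    intro z
    rw [Complex.mul_conj, Complex.normSq_eq_norm_sq]
  have : ((∑ r ∈ U, ∑ s ∈ U, ‖∑ h ∈ range H, ee (h * (q * (((r : ℝ) - s) / M)))‖ ^ 2 : ℝ) : ℂ) =
      ((∑ h ∈ range H, ∑ h' ∈ range H, ‖Uh M U ((h - h' + (h' - h)) * q)‖ ^ 2 : ℝ) : ℂ) := by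
    rw [Complex.ofReal_sum, Complex.ofReal_sum]
    simp_rw [Complex.ofReal_sum, ← norm_conj_symm, key, map_sum, sum_mul_sum]
    calc _ = ∑ r ∈ U, ∑ h ∈ range H, ∑ s ∈ U, ∑ h' ∈ range H, ee (h * (q * (((r : ℝ) - s) / M))) * starRingEnd ℂ (ee (h' * (q * (((r : ℝ) - s) / M)))) :=
          sum_congr rfl fun r _ => sum_comm
      _ = ∑ h ∈ range H, ∑ r ∈ U, ∑ s ∈ U, ∑ h' ∈ range H, ee (h * (q * (((r : ℝ) - s) / M))) * starRingEnd ℂ (ee (h' * (q * (((r : ℝ) - s) / M)))) := sum_comm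
      _ = ∑ h ∈ range H, ∑ r ∈ U, ∑ h' ∈ range H, ∑ s ∈ U, ee (h * (q * (((r : ℝ) - s) / M))) * starRingEnd ℂ (ee (h' * (q * (((r : ℝ) - s) / M)))) :=
          sum_congr rfl fun h _ => sum_congr rfl fun r _ => sum_comm
      _ = _ := sum_congr rfl fun h _ => sum_comm
  exact_mod_cast this

/-- pairs of frequencies whose difference is close to a rational of small denominator -/
def PE (N M E : ℕ) (U : Finset ℕ) : Finset (ℕ × ℕ) :=
  @Finset.filter _ (fun p => ∃ q : ℕ, 1 ≤ q ∧ q ≤ E ∧ ∃ a : ℤ,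
    |q * (((p.1 : ℝ) - p.2) / M) - a| ≤ (E : ℝ) / N ^ 2) (Classical.decPred _) (U ×ˢ U)

lemma mem_PE (N M E : ℕ) (U : Finset ℕ) (p : ℕ × ℕ) : p ∈ PE N M E U ↔ p ∈ U ×ˢ U ∧
    ∃ q : ℕ, 1 ≤ q ∧ q ≤ E ∧ ∃ a : ℤ, |q * (((p.1 : ℝ) - p.2) / M) - a| ≤ (E : ℝ) / N ^ 2 := by
  classical
  unfold PE
  rw [mem_filter]

lemma div_double (E H : ℕ) (G : ℕ → ℝ) (hG : ∀ m, 0 ≤ G m) :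
    ∑ q ∈ Icc 1 E, ∑ k ∈ range H, G (k * q) ≤ E * G 0 + ∑ m ∈ Icc 1 (H * E), (dE E m : ℝ) * G m := by
  have h1 : ∀ q ∈ Icc 1 E, ∑ k ∈ range H, G (k * q) ≤ G 0 + ∑ m ∈ Icc 1 (H * E), if q ∣ m then G m else 0 := by
    intro q hq
    rw [mem_Icc] at hq
    rw [← sum_image (f := G) (g := fun k => k * q)]
    · rw [← sum_filter]
      calc _ ≤ ∑ m ∈ insert 0 ((Icc 1 (H * E)).filter (fun m => q ∣ m)), G m := by
            refine sum_le_sum_of_subset_of_nonneg ?_ (fun _ _ _ => hG _)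
            intro m hm
            rw [mem_image] at hm
            obtain ⟨k, hk, rfl⟩ := hm
            rw [mem_range] at hk
            rcases Nat.eq_zero_or_pos k with rfl | hk0
            · simp
            · rw [mem_insert, mem_filter, mem_Icc]
              right
              refine ⟨⟨Nat.mul_pos hk0 (by omega), Nat.mul_le_mul hk.le hq.2⟩, Dvd.intro_left _ rfl⟩
        _ = _ := by
            rw [sum_insert]
            simp
    · intro a _ b _ hab
      exact Nat.eq_of_mul_eq_mul_right (by omega) hab
  refine (sum_le_sum h1).trans ?_
  rw [sum_add_distrib, sum_const, Nat.card_Icc, nsmul_eq_mul, Nat.add_sub_cancel, sum_comm]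
  refine add_le_add_right (le_of_eq ?_) _
  refine sum_congr rfl fun m _ => ?_
  rw [← sum_filter, sum_const, nsmul_eq_mul, dE]

lemma PE_card_le (N M E H : ℕ) (hE : 1 ≤ E) (hN : 1 ≤ N) (hH : 1 ≤ H) (hHE : 16 * (H * E) ≤ N ^ 2)
    (U : Finset ℕ) :
    ((PE N M E U).card : ℝ) ≤ 8 / H * (E * (U.card : ℝ) ^ 2 +
      ∑ m ∈ Icc 1 (H * E), (dE E m : ℝ) * ‖Uh M U m‖ ^ 2) := by
  have hHr : (0 : ℝ) < H := by exact_mod_cast hH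
  have hNr : (0 : ℝ) < N := by exact_mod_cast hN
  set g : ℕ → ℕ → ℕ → ℝ := fun q r s => ‖∑ h ∈ range H, ee (h * (q * (((r : ℝ) - s) / M)))‖ ^ 2 with hg
  have h1 : ∀ p ∈ PE N M E U, (H : ℝ) ^ 2 / 4 ≤ ∑ q ∈ Icc 1 E, g q p.1 p.2 := by
    intro p hp
    have hp := (mem_PE N M E U p).1 hp
    obtain ⟨_, q, hq1, hq2, a, ha⟩ := hp
    have h2 := geom_lower H (q * (((p.1 : ℝ) - p.2) / M)) (by
      have := (round_le (q * (((p.1 : ℝ) - p.2) / M)) a).trans ha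
      calc _ ≤ (H : ℝ) * (E / N ^ 2) := by gcongr
        _ ≤ 1 / 16 := by
          rw [mul_div_assoc', div_le_div_iff₀ (by positivity) (by norm_num)]
          have : (16 * (H * E) : ℝ) ≤ N ^ 2 := by exact_mod_cast hHE
          linarith)
    calc (H : ℝ) ^ 2 / 4 = (H / 2) ^ 2 := by ring
      _ ≤ g q p.1 p.2 := by simp only [hg]; gcongr
      _ ≤ _ := single_le_sum (f := fun q => g q p.1 p.2) (fun q _ => by rw [hg]; positivity) (mem_Icc.2 ⟨hq1, hq2⟩)
  have h2 : ((PE N M E U).card : ℝ) * (H ^ 2 / 4) ≤ 2 * H * (E * (U.card : ℝ) ^ 2 +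
      ∑ m ∈ Icc 1 (H * E), (dE E m : ℝ) * ‖Uh M U m‖ ^ 2) := by
    calc ((PE N M E U).card : ℝ) * (H ^ 2 / 4) = ∑ p ∈ PE N M E U, (H : ℝ) ^ 2 / 4 := by
          rw [sum_const, nsmul_eq_mul]
      _ ≤ ∑ p ∈ PE N M E U, ∑ q ∈ Icc 1 E, g q p.1 p.2 := sum_le_sum h1
      _ ≤ ∑ p ∈ U ×ˢ U, ∑ q ∈ Icc 1 E, g q p.1 p.2 := by
          refine sum_le_sum_of_subset_of_nonneg ?_ ?_
          · intro p hp
            exact ((mem_PE N M E U p).1 hp).1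
          · intro p _ _
            exact sum_nonneg fun q _ => by rw [hg]; positivity
      _ = ∑ q ∈ Icc 1 E, ∑ r ∈ U, ∑ s ∈ U, g q r s := by
          rw [sum_comm]
          refine sum_congr rfl fun q _ => ?_
          rw [sum_product]
      _ = ∑ q ∈ Icc 1 E, ∑ h ∈ range H, ∑ h' ∈ range H, ‖Uh M U ((h - h' + (h' - h)) * q)‖ ^ 2 :=
          sum_congr rfl fun q _ => sum_sq_expand M U q H
      _ ≤ ∑ q ∈ Icc 1 E, 2 * H * ∑ k ∈ range H, ‖Uh M U (k * q)‖ ^ 2 :=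
          sum_le_sum fun q _ => double_sum_le H (fun k => ‖Uh M U (k * q)‖ ^ 2) (fun k => by positivity)
      _ = 2 * H * ∑ q ∈ Icc 1 E, ∑ k ∈ range H, ‖Uh M U (k * q)‖ ^ 2 := by rw [mul_sum]
      _ ≤ 2 * H * (E * ‖Uh M U 0‖ ^ 2 + ∑ m ∈ Icc 1 (H * E), (dE E m : ℝ) * ‖Uh M U m‖ ^ 2) := by
          gcongr
          exact div_double E H (fun m => ‖Uh M U m‖ ^ 2) (fun m => by positivity)
      _ ≤ _ := by
          have := Uh_le M U 0
          gcongr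
  have h3 : 8 / H * (E * (U.card : ℝ) ^ 2 + ∑ m ∈ Icc 1 (H * E), (dE E m : ℝ) * ‖Uh M U m‖ ^ 2)
      = (2 * H * (E * (U.card : ℝ) ^ 2 + ∑ m ∈ Icc 1 (H * E), (dE E m : ℝ) * ‖Uh M U m‖ ^ 2)) / (H ^ 2 / 4) := by
    field_simp
    ring
  rw [h3, le_div_iff₀ (by positivity)]
  exact h2

lemma split_d (d T : ℝ) (B : ℕ) (hd : 0 ≤ d) (hT : 0 < T) : d ≤ T + d ^ (B + 1) / T ^ B := by
  rcases le_total d T with h | h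
  · have : 0 ≤ d ^ (B + 1) / T ^ B := by positivity
    linarith
  · have : d ≤ d ^ (B + 1) / T ^ B := by
      rw [le_div_iff₀ (by positivity), pow_succ, mul_comm]
      gcongr
    linarith

lemma pair_count (B : ℕ) (τ : ℝ) (hτ : 0 < τ) : ∃ C : ℝ, 1 ≤ C ∧ ∀ N E : ℕ, 1 ≤ E → 16 * E ≤ N ^ 2 →
    ∀ U ⊆ range (20 * N ^ 2), ∀ T : ℝ, 0 < T →
      ((PE N (20 * N ^ 2) E U).card : ℝ) ≤ C * E * (E * (U.card : ℝ) ^ 2 / N ^ 2 + T * U.card +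
        (U.card : ℝ) ^ 2 * (E : ℝ) ^ τ / T ^ B) := by
  obtain ⟨C, hC, hmom⟩ := dE_moment B τ hτ
  refine ⟨256 * (20 + C), by linarith, ?_⟩
  intro N E hE hEN U hU T hT
  have hN : 1 ≤ N := by
    rcases Nat.eq_zero_or_pos N with rfl | h
    · simp at hEN; omega
    · exact h
  set H := N ^ 2 / (16 * E) with hHdef
  have hH : 1 ≤ H := by
    rw [hHdef, Nat.one_le_div_iff (by omega)]; exact hEN
  have hHE : 16 * (H * E) ≤ N ^ 2 := by
    have := Nat.div_mul_le_self (N ^ 2) (16 * E)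
    rw [← hHdef] at this
    nlinarith
  have hH2 : N ^ 2 ≤ 32 * (H * E) := by
    have := Nat.lt_div_mul_add (a := N ^ 2) (b := 16 * E) (by omega)
    rw [← hHdef] at this
    nlinarith
  have hHr : (0 : ℝ) < H := by exact_mod_cast hH
  have hEr : (0 : ℝ) < E := by exact_mod_cast hE
  have hNr : (0 : ℝ) < N := by exact_mod_cast hN
  have hH2r : (N : ℝ) ^ 2 ≤ 32 * (H * E) := by exact_mod_cast hH2
  have hHEr : 16 * ((H : ℝ) * E) ≤ N ^ 2 := by exact_mod_cast hHE
  set M := 20 * N ^ 2 with hM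
  have hM0 : 0 < M := by positivity
  set R : ℝ := (U.card : ℝ) with hR
  have hR0 : 0 ≤ R := by positivity
  have h1 := PE_card_le N M E H hE hN hH hHE U
  have h2 : ∑ m ∈ Icc 1 (H * E), (dE E m : ℝ) * ‖Uh M U m‖ ^ 2 ≤
      T * (M * R) + R ^ 2 / T ^ B * (C * N ^ 2 * (E : ℝ) ^ τ) := by
    calc _ ≤ ∑ m ∈ Icc 1 (H * E), (T * ‖Uh M U m‖ ^ 2 + R ^ 2 / T ^ B * (dE E m : ℝ) ^ (B + 1)) := by
          refine sum_le_sum fun m _ => ?_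
          have s := split_d (dE E m) T B (by positivity) hT
          have u := Uh_le M U m
          calc (dE E m : ℝ) * ‖Uh M U m‖ ^ 2 ≤ (T + (dE E m : ℝ) ^ (B + 1) / T ^ B) * ‖Uh M U m‖ ^ 2 := by gcongr
            _ = T * ‖Uh M U m‖ ^ 2 + (dE E m : ℝ) ^ (B + 1) / T ^ B * ‖Uh M U m‖ ^ 2 := by ring
            _ ≤ T * ‖Uh M U m‖ ^ 2 + (dE E m : ℝ) ^ (B + 1) / T ^ B * R ^ 2 := by gcongr
            _ = _ := by ring
      _ = T * ∑ m ∈ Icc 1 (H * E), ‖Uh M U m‖ ^ 2 + R ^ 2 / T ^ B * ∑ m ∈ Icc 1 (H * E), (dE E m : ℝ) ^ (B + 1) := by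
          rw [sum_add_distrib, mul_sum, mul_sum]
      _ ≤ _ := by
          gcongr
          · rw [hR, ← Uh_parseval M hM0 U hU]
            refine sum_le_sum_of_subset_of_nonneg ?_ (fun _ _ _ => by positivity)
            intro m hm
            rw [mem_Icc] at hm
            rw [mem_range, hM]
            nlinarith
          · refine (hmom E (H * E) hE).trans ?_
            push_cast
            have : (H : ℝ) * E ≤ N ^ 2 := by nlinarith
            gcongr
  have h8 : 8 / (H : ℝ) ≤ 256 * E / N ^ 2 := by
    rw [div_le_div_iff₀ hHr (by positivity)]
    linarith
  have hx0 : 0 ≤ E * R ^ 2 + (T * (M * R) + R ^ 2 / T ^ B * (C * N ^ 2 * (E : ℝ) ^ τ)) := by positivity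
  calc _ ≤ _ := h1
    _ ≤ 8 / H * (E * R ^ 2 + (T * (M * R) + R ^ 2 / T ^ B * (C * N ^ 2 * (E : ℝ) ^ τ))) := by gcongr
    _ ≤ 256 * E / N ^ 2 * (E * R ^ 2 + (T * (M * R) + R ^ 2 / T ^ B * (C * N ^ 2 * (E : ℝ) ^ τ))) := by gcongr
    _ = 256 * E * (E * R ^ 2 / N ^ 2 + 20 * (T * R) + C * (R ^ 2 * (E : ℝ) ^ τ / T ^ B)) := by
        have : (M : ℝ) = 20 * N ^ 2 := by rw [hM]; push_cast; ring
        rw [this]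
        field_simp
        ring
    _ ≤ 256 * E * ((20 + C) * (E * R ^ 2 / N ^ 2) + (20 + C) * (T * R) + (20 + C) * (R ^ 2 * (E : ℝ) ^ τ / T ^ B)) := by
        gcongr
        · exact le_mul_of_one_le_left (by positivity) (by linarith)
        · linarith
        · linarith
    _ = _ := by ring

/-! ## Level sets -/

/-- quadratic exponential sum -/
def FF (N : ℕ) (f : ℤ → ℂ) (θ : ℝ) : ℂ := ∑ x ∈ Icc (-(N : ℤ)) N, f x * ee ((x : ℝ) ^ 2 * θ)

lemma layer (φ : ℝ) (b : ℕ → ℝ) (P : ℕ → Prop) [DecidablePred P] (hb : ∀ i, 0 ≤ b i) (h0 : φ ≤ b 0)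
    (h : ∀ i, ¬ P i → φ ≤ b (i + 1)) (I : ℕ) :
    φ ≤ b I + ∑ i ∈ range I, if P i then b i else 0 := by
  induction I with
  | zero => simpa using h0
  | succ I ih =>
    rw [sum_range_succ]
    have hs : 0 ≤ ∑ i ∈ range I, if P i then b i else 0 :=
      sum_nonneg fun i _ => by split_ifs <;> simp [hb i]
    have := hb (I + 1)
    by_cases hP : P I
    · rw [if_pos hP]; linarith
    · rw [if_neg hP]
      have := h I hP
      linarith

lemma KK_le (N : ℕ) (hN : 1 ≤ N) (θ : ℝ) : ‖KK N θ‖ ≤ 10 * (N : ℝ) ^ 2 := by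
  have hNr : (1 : ℝ) ≤ N := by exact_mod_cast hN
  rw [KK]
  calc _ ≤ ∑ y ∈ Icc (-(2 * N : ℤ)) (2 * N), (2 * (N : ℝ)) := by
        refine (norm_sum_le _ _).trans (sum_le_sum fun y _ => ?_)
        rw [norm_mul, ee_norm, mul_one, Complex.norm_real, Real.norm_eq_abs]
        rw [abs_of_nonneg (by exact_mod_cast tent_nonneg N y)]; exact_mod_cast tent_le N y
    _ = (4 * N + 1) * (2 * (N : ℝ)) := by
        rw [sum_const, Int.card_Icc, nsmul_eq_mul]
        congr 1
        have : ((2 * (N : ℤ) + 1 - -(2 * N)).toNat : ℤ) = 4 * N + 1 := by omega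
        exact_mod_cast this
    _ ≤ _ := by nlinarith

lemma duality (N M : ℕ) (hN : 1 ≤ N) (f : ℤ → ℂ) (hf : ∑ x ∈ Icc (-(N : ℤ)) N, ‖f x‖ ^ 2 ≤ N)
    (U : Finset ℕ) (β : ℝ) (hβ : 0 ≤ β) (hU : ∀ r ∈ U, β * N ≤ ‖FF N f (r / M)‖) :
    (U.card * (β * N)) ^ 2 ≤ ∑ r ∈ U, ∑ s ∈ U, ‖KK N (((r : ℝ) - s) / M)‖ := by
  have hNr : (0 : ℝ) < N := by exact_mod_cast hN
  have key : ∀ z : ℂ, ((‖z‖ ^ 2 : ℝ) : ℂ) = z * starRingEnd ℂ z := by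
    intro z
    rw [Complex.mul_conj, Complex.normSq_eq_norm_sq]
  set η : ℕ → ℂ := fun r => starRingEnd ℂ (FF N f (r / M)) / ‖FF N f (r / M)‖ with hη
  have hη1 : ∀ r, ‖η r‖ ≤ 1 := by
    intro r
    simp only [hη]
    rw [norm_div, RCLike.norm_conj, Complex.norm_real, norm_norm]
    exact div_self_le_one _
  have hη2 : ∀ r, η r * FF N f (r / M) = (‖FF N f (r / M)‖ : ℂ) := by
    intro r
    simp only [hη]
    by_cases h : FF N f (r / M) = 0
    · simp [h]
    · have : (‖FF N f (r / M)‖ : ℂ) ≠ 0 := by simpa using h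
      rw [div_mul_eq_mul_div, div_eq_iff this, mul_comm, ← key]
      push_cast; ring
  set G : ℤ → ℂ := fun x => ∑ r ∈ U, η r * ee ((x : ℝ) ^ 2 * (r / M)) with hG
  have h1 : U.card * (β * N) ≤ ∑ x ∈ Icc (-(N : ℤ)) N, ‖f x‖ * ‖G x‖ := by
    calc U.card * (β * N) = ∑ r ∈ U, β * N := by rw [sum_const, nsmul_eq_mul]
      _ ≤ ∑ r ∈ U, ‖FF N f (r / M)‖ := sum_le_sum hU
      _ = ‖((∑ r ∈ U, ‖FF N f (r / M)‖ : ℝ) : ℂ)‖ := by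
          rw [Complex.norm_real, Real.norm_of_nonneg (sum_nonneg fun _ _ => norm_nonneg _)]
      _ = ‖∑ x ∈ Icc (-(N : ℤ)) N, f x * G x‖ := by
          congr 1
          push_cast
          simp_rw [← hη2, hG, FF, mul_sum]
          rw [sum_comm]
          refine sum_congr rfl fun x _ => sum_congr rfl fun r _ => by ring
      _ ≤ _ := by
          refine (norm_sum_le _ _).trans (sum_le_sum fun x _ => ?_)
          rw [norm_mul]
  have h2 : (U.card * (β * N)) ^ 2 ≤ N * ∑ x ∈ Icc (-(N : ℤ)) N, ‖G x‖ ^ 2 := by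
    calc (U.card * (β * N)) ^ 2 ≤ (∑ x ∈ Icc (-(N : ℤ)) N, ‖f x‖ * ‖G x‖) ^ 2 := by gcongr
      _ ≤ (∑ x ∈ Icc (-(N : ℤ)) N, ‖f x‖ ^ 2) * ∑ x ∈ Icc (-(N : ℤ)) N, ‖G x‖ ^ 2 :=
          sum_mul_sq_le_sq_mul_sq _ _ _
      _ ≤ _ := by gcongr
  have h3 : N * ∑ x ∈ Icc (-(N : ℤ)) N, ‖G x‖ ^ 2 ≤ ∑ x ∈ Icc (-(2 * N : ℤ)) (2 * N), (tent N x : ℝ) * ‖G x‖ ^ 2 := by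
    rw [mul_sum]
    calc _ ≤ ∑ x ∈ Icc (-(N : ℤ)) N, (tent N x : ℝ) * ‖G x‖ ^ 2 := by
          refine sum_le_sum fun x hx => ?_
          have : (N : ℝ) ≤ tent N x := by
            exact_mod_cast tent_ge N x (abs_le.2 (mem_Icc.1 hx))
          gcongr
      _ ≤ _ := by
          refine sum_le_sum_of_subset_of_nonneg ?_ ?_
          · apply Icc_subset_Icc <;> omega
          · intro x _ _
            have : (0 : ℝ) ≤ tent N x := by exact_mod_cast tent_nonneg N x
            positivity
  have h4 : ((∑ x ∈ Icc (-(2 * N : ℤ)) (2 * N), (tent N x : ℝ) * ‖G x‖ ^ 2 : ℝ) : ℂ) =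
      ∑ r ∈ U, ∑ s ∈ U, η r * starRingEnd ℂ (η s) * KK N (((r : ℝ) - s) / M) := by
    simp_rw [KK, mul_sum]
    rw [Complex.ofReal_sum]
    rw [sum_congr rfl fun r _ => sum_comm, sum_comm]
    refine sum_congr rfl fun x _ => ?_
    rw [Complex.ofReal_mul, key, hG]
    simp only
    rw [map_sum, sum_mul_sum, mul_sum]
    refine sum_congr rfl fun r _ => ?_
    rw [mul_sum]
    refine sum_congr rfl fun s _ => ?_
    have : ee ((x : ℝ) ^ 2 * (((r : ℝ) - s) / M)) = ee ((x : ℝ) ^ 2 * (r / M)) * ee (-((x : ℝ) ^ 2 * (s / M))) := by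
      rw [← ee_add]
      congr 1
      ring
    rw [this, map_mul, ← ee_neg]
    ring
  refine (h2.trans h3).trans ?_
  have h5 : ∑ x ∈ Icc (-(2 * N : ℤ)) (2 * N), (tent N x : ℝ) * ‖G x‖ ^ 2 =
      ‖((∑ x ∈ Icc (-(2 * N : ℤ)) (2 * N), (tent N x : ℝ) * ‖G x‖ ^ 2 : ℝ) : ℂ)‖ := by
    rw [Complex.norm_real, Real.norm_of_nonneg]
    refine sum_nonneg fun x _ => ?_
    have : (0 : ℝ) ≤ tent N x := by exact_mod_cast tent_nonneg N x
    positivity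
  rw [h5, h4]
  refine (norm_sum_le _ _).trans (sum_le_sum fun r _ => (norm_sum_le _ _).trans (sum_le_sum fun s _ => ?_))
  rw [norm_mul, norm_mul, RCLike.norm_conj]
  have := hη1 r
  have := hη1 s
  calc _ ≤ 1 * 1 * ‖KK N (((r : ℝ) - s) / M)‖ := by gcongr
    _ = _ := by ring

set_option maxHeartbeats 1000000 in
lemma level_large : ∃ C : ℝ, 1 ≤ C ∧ ∀ N : ℕ, 1 ≤ N → ∀ f : ℤ → ℂ,
    ∑ x ∈ Icc (-(N : ℤ)) N, ‖f x‖ ^ 2 ≤ N → ∀ γ : ℝ, 0 < γ → γ ≤ 1 → C ≤ γ ^ 8 * N →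
    ∀ U ⊆ range (20 * N ^ 2), (∀ r ∈ U, γ ^ 2 * N ≤ ‖FF N f (r / (20 * N ^ 2 : ℕ))‖) →
      (U.card : ℝ) ≤ C / γ ^ 9 := by
  obtain ⟨CW, hCW, hW⟩ := weyl_inverse
  obtain ⟨C2, hC2, hP⟩ := pair_count 10 (1 / 4) (by norm_num)
  obtain ⟨C0, hC0⟩ := exists_nat_ge CW
  have hC01 : (1 : ℝ) ≤ C0 := hCW.trans hC0
  have hC0n : 1 ≤ C0 := by exact_mod_cast hC01
  set C3 : ℝ := 800 * C2 * C0 with hC3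
  have hC31 : 1 ≤ C3 := by
    have : 1 ≤ C2 * C0 := one_le_mul_of_one_le_of_one_le hC2 hC01
    rw [hC3]; linarith
  set A : ℝ := 1600 * C3 * C0 with hA
  have hA1 : 1 ≤ A := by
    have : 1 ≤ C3 * C0 := one_le_mul_of_one_le_of_one_le hC31 hC01
    rw [hA]; linarith
  refine ⟨6400 * C0 + A + 2 * C3 * A, by nlinarith, ?_⟩
  intro N hN f hf γ hγ hγ1 hCγ U hU hUF
  have hNr : (1 : ℝ) ≤ N := by exact_mod_cast hN
  have hC3A : 1 ≤ C3 * A := one_le_mul_of_one_le_of_one_le hC31 hA1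
  set M := 20 * N ^ 2 with hM
  set R : ℝ := (U.card : ℝ) with hR
  have hR0 : 0 ≤ R := by positivity
  have hdual := duality N M hN f hf U (γ ^ 2) (by positivity) hUF
  -- choose the number of layers
  have hx1 : 1 ≤ 20 / γ ^ 4 := by
    rw [le_div_iff₀ (by positivity)]
    have : γ ^ 4 ≤ 1 := pow_le_one₀ hγ.le hγ1
    linarith
  obtain ⟨n, hn1, hn2⟩ := exists_nat_pow_near hx1 (by norm_num : (1 : ℝ) < 2)
  set I := n + 1 with hI
  set D : ℝ := 400 * C0 / γ ^ 8 with hD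
  have hD0 : 0 < D := by positivity
  set T : ℝ := A / γ with hT
  have hT0 : 0 < T := by positivity
  set X : ℝ := D * R ^ 2 / N ^ 2 + T * R + R ^ 2 * D ^ (1 / 4 : ℝ) / T ^ 10 with hX
  have hX0 : 0 ≤ X := by positivity
  have hE : ∀ i ∈ range I, ((C0 * 4 ^ i : ℕ) : ℝ) ≤ D := by
    intro i hi
    have hin : i ≤ n := by rw [mem_range] at hi; omega
    have h1 : (2 : ℝ) ^ i ≤ 20 / γ ^ 4 := le_trans (pow_le_pow_right₀ (by norm_num) hin) hn1
    have h2 : (4 : ℝ) ^ i ≤ (20 / γ ^ 4) ^ 2 := by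
      rw [show (4 : ℝ) = 2 ^ 2 by norm_num, ← pow_mul, mul_comm, pow_mul]
      gcongr
    push_cast
    calc (C0 : ℝ) * 4 ^ i ≤ C0 * (20 / γ ^ 4) ^ 2 := by gcongr
      _ = D := by rw [hD]; field_simp; norm_num
  have hDN : 16 * D ≤ N := by
    rw [hD, mul_div_assoc', div_le_iff₀ (by positivity)]
    nlinarith
  have hPE : ∀ i ∈ range I, ((PE N M (C0 * 4 ^ i) U).card : ℝ) ≤ C2 * (C0 * 4 ^ i) * X := by
    intro i hi
    have h1 := hE i hi
    have h16 : 16 * (C0 * 4 ^ i) ≤ N := by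
      have : (16 * (C0 * 4 ^ i : ℕ) : ℝ) ≤ N := by linarith
      exact_mod_cast this
    refine (hP N (C0 * 4 ^ i) (Nat.mul_pos hC0n (by positivity)) (by nlinarith) U hU T hT0).trans ?_
    rw [hX]
    set e : ℝ := ((C0 * 4 ^ i : ℕ) : ℝ) with he
    have : e = C0 * 4 ^ i := by rw [he]; push_cast; ring
    rw [← this]
    have he0 : 0 ≤ e := by positivity
    gcongr
  have hlay : ∀ r ∈ U, ∀ s ∈ U, ‖KK N (((r : ℝ) - s) / M)‖ ≤ N ^ 2 * (10 / 2 ^ I +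
      ∑ i ∈ range I, if (r, s) ∈ PE N M (C0 * 4 ^ i) U then 10 / 2 ^ i else 0) := by
    intro r hr s hs
    rw [← div_le_iff₀' (by positivity)]
    -- restrict to layers below I
    have hl := layer (‖KK N (((r : ℝ) - s) / M)‖ / N ^ 2) (fun i => 10 / 2 ^ i)
      (fun i => 10 / 2 ^ (i + 1) < ‖KK N (((r : ℝ) - s) / M)‖ / N ^ 2)
      (fun i => by positivity) (by
        rw [pow_zero, div_one, div_le_iff₀ (by positivity)]
        exact KK_le N hN _) (fun i hi => not_lt.1 hi) I
    refine hl.trans ?_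
    gcongr with i hi
    split_ifs with h1 h2 h2
    · exact le_rfl
    · exfalso
      apply h2
      rw [mem_PE]
      refine ⟨mem_product.2 ⟨hr, hs⟩, ?_⟩
      have hEN : C0 * 4 ^ i ≤ N := by
        have := hE i hi
        have : ((C0 * 4 ^ i : ℕ) : ℝ) ≤ N := by linarith
        exact_mod_cast this
      apply hW N (C0 * 4 ^ i) (Nat.mul_pos hC0n (by positivity)) hEN
      rw [lt_div_iff₀ (by positivity)] at h1
      have h3 : (10 / 2 ^ (i + 1) * (N : ℝ) ^ 2) ^ 2 < ‖KK N (((r : ℝ) - s) / M)‖ ^ 2 := by gcongr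
      refine lt_of_le_of_lt ?_ h3
      have e1 : (10 / 2 ^ (i + 1) * (N : ℝ) ^ 2) ^ 2 = 25 * N ^ 4 / 4 ^ i := by
        rw [show (4 : ℝ) = 2 ^ 2 by norm_num, ← pow_mul, mul_comm 2 i, pow_mul]
        field_simp
        ring
      rw [e1]
      push_cast
      rw [div_le_div_iff₀ (by positivity) (by positivity)]
      have : CW * (N ^ 4 * 4 ^ i) ≤ (25 * C0) * ((N : ℝ) ^ 4 * 4 ^ i) := by gcongr; linarith
      linarith
    · positivity
    · exact le_rfl
  have hsum : ∑ r ∈ U, ∑ s ∈ U, ‖KK N (((r : ℝ) - s) / M)‖ ≤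
      N ^ 2 * (R ^ 2 * (10 / 2 ^ I) + ∑ i ∈ range I, (10 / 2 ^ i) * ((PE N M (C0 * 4 ^ i) U).card : ℝ)) := by
    calc _ ≤ ∑ r ∈ U, ∑ s ∈ U, (N : ℝ) ^ 2 * (10 / 2 ^ I +
      ∑ i ∈ range I, if (r, s) ∈ PE N M (C0 * 4 ^ i) U then 10 / 2 ^ i else 0) :=
          sum_le_sum fun r hr => sum_le_sum fun s hs => hlay r hr s hs
      _ = N ^ 2 * (R ^ 2 * (10 / 2 ^ I) + ∑ i ∈ range I, ∑ p ∈ U ×ˢ U, if p ∈ PE N M (C0 * 4 ^ i) U then (10 / 2 ^ i : ℝ) else 0) := by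
          rw [← sum_product' (f := fun r s => (N : ℝ) ^ 2 * (10 / 2 ^ I +
      ∑ i ∈ range I, if (r, s) ∈ PE N M (C0 * 4 ^ i) U then 10 / 2 ^ i else 0))]
          rw [← mul_sum, sum_add_distrib, sum_const, card_product, nsmul_eq_mul, sum_comm]
          push_cast
          rw [hR, sq (U.card : ℝ)]
      _ = _ := by
          congr 2
          refine sum_congr rfl fun i _ => ?_
          rw [← sum_filter, sum_const, nsmul_eq_mul, mul_comm]
          congr 3
          ext p
          rw [mem_filter]
          constructor
          · exact fun h => h.2
          · exact fun h => ⟨((mem_PE _ _ _ _ _).1 h).1, h⟩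
  have hsum2 : ∑ i ∈ range I, (10 / 2 ^ i) * ((PE N M (C0 * 4 ^ i) U).card : ℝ) ≤ 400 * C2 * C0 * X / γ ^ 4 := by
    calc _ ≤ ∑ i ∈ range I, (10 * C2 * C0 * X) * 2 ^ i := by
          refine sum_le_sum fun i hi => ?_
          have := hPE i hi
          calc _ ≤ 10 / 2 ^ i * (C2 * (C0 * 4 ^ i) * X) := by gcongr
            _ = _ := by
              rw [show (4 : ℝ) = 2 ^ 2 by norm_num, ← pow_mul, mul_comm 2 i, pow_mul]
              field_simp
      _ = (10 * C2 * C0 * X) * (2 ^ I - 1) := by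
          rw [← mul_sum, geom_sum_eq (by norm_num)]; norm_num
      _ ≤ (10 * C2 * C0 * X) * (40 / γ ^ 4) := by
          gcongr
          rw [hI, pow_succ]
          have e : 40 / γ ^ 4 = 20 / γ ^ 4 * 2 := by ring
          rw [e]
          linarith
      _ = _ := by ring
  have hI2 : 10 / (2 : ℝ) ^ I ≤ γ ^ 4 / 2 := by
    rw [div_lt_iff₀ (by positivity)] at hn2
    rw [div_le_div_iff₀ (by positivity) (by norm_num)]
    linarith
  -- combine
  have hmain : γ ^ 8 * R ^ 2 ≤ C3 * X := by
    have h1 : (R * (γ ^ 2 * N)) ^ 2 ≤ N ^ 2 * (R ^ 2 * (γ ^ 4 / 2) + 400 * C2 * C0 * X / γ ^ 4) := by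
      refine (hdual.trans hsum).trans ?_
      gcongr
    have h2 : R ^ 2 * γ ^ 4 ≤ R ^ 2 * (γ ^ 4 / 2) + 400 * C2 * C0 * X / γ ^ 4 := by
      have e : (R * (γ ^ 2 * N)) ^ 2 = N ^ 2 * (R ^ 2 * γ ^ 4) := by ring
      rw [e] at h1
      exact le_of_mul_le_mul_left h1 (by positivity)
    have h3 : R ^ 2 * γ ^ 4 / 2 ≤ 400 * C2 * C0 * X / γ ^ 4 := by linarith
    rw [le_div_iff₀ (by positivity)] at h3
    rw [hC3]
    linarith
  have t1 : C3 * (D * R ^ 2 / N ^ 2) ≤ γ ^ 8 * R ^ 2 / 4 := by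
    have h1 : A ≤ γ ^ 8 * N := by linarith
    have h2 : A ≤ (γ ^ 8 * N) ^ 2 := h1.trans (le_self_pow₀ (hA1.trans h1) (by norm_num))
    have e : C3 * (D * R ^ 2 / N ^ 2) = (A / 4) * R ^ 2 / (γ ^ 8 * N ^ 2) := by
      rw [hD, hA]; field_simp; ring
    rw [e, div_le_iff₀ (by positivity)]
    have : (A / 4) * R ^ 2 ≤ ((γ ^ 8 * N) ^ 2 / 4) * R ^ 2 := by gcongr
    linarith
  have hD4 : D ^ (1 / 4 : ℝ) ≤ 400 * C0 / γ ^ 2 := by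
    have h1 : D ≤ (400 * C0 / γ ^ 2) ^ (4 : ℕ) := by
      rw [hD, div_pow, ← pow_mul]
      gcongr
      exact le_self_pow₀ (by linarith) (by norm_num)
    calc D ^ (1 / 4 : ℝ) ≤ ((400 * C0 / γ ^ 2) ^ (4 : ℕ)) ^ (1 / 4 : ℝ) := by gcongr
      _ = _ := by
        rw [← Real.rpow_natCast, ← Real.rpow_mul (by positivity)]
        norm_num
  have t2 : C3 * (R ^ 2 * D ^ (1 / 4 : ℝ) / T ^ 10) ≤ γ ^ 8 * R ^ 2 / 4 := by
    calc _ ≤ C3 * (R ^ 2 * (400 * C0 / γ ^ 2) / T ^ 10) := by gcongr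
      _ = (γ ^ 8 * R ^ 2 / 4) * (A / A ^ 10) := by
          have : C3 * (400 * C0) = A / 4 := by rw [hA]; ring
          rw [hT, div_pow]
          have hA0 : A ≠ 0 := by positivity
          have e : C3 * (R ^ 2 * (400 * C0 / γ ^ 2) / (A ^ 10 / γ ^ 10)) = C3 * (400 * C0) * (R ^ 2 * γ ^ 8 / A ^ 10) := by
            field_simp
          rw [e, this]
          ring
      _ ≤ (γ ^ 8 * R ^ 2 / 4) * 1 := by
          gcongr
          rw [div_le_one (by positivity)]
          exact le_self_pow₀ hA1 (by norm_num)
      _ = _ := by ring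
  have t3 : γ ^ 8 * R ^ 2 / 2 ≤ C3 * (T * R) := by
    rw [hX] at hmain
    linarith
  rw [le_div_iff₀ (by positivity)]
  rcases hR0.eq_or_lt with h | h
  · rw [← h, zero_mul]; positivity
  · have h1 : γ ^ 8 * R / 2 ≤ C3 * T := by
      have : (γ ^ 8 * R / 2) * R ≤ (C3 * T) * R := by linarith
      exact le_of_mul_le_mul_right this h
    have h2 : C3 * T = C3 * A / γ := by rw [hT]; ring
    rw [h2, le_div_iff₀ hγ] at h1
    have : R * γ ^ 9 = 2 * (γ ^ 8 * R / 2 * γ) := by ring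
    linarith

/-! ## Fourth moment -/

/-- pairs with difference of squares equal to `m` -/
def pairs (N : ℕ) (m : ℤ) : Finset (ℤ × ℤ) :=
  (Icc (-(N : ℤ)) N ×ˢ Icc (-(N : ℤ)) N).filter (fun p => p.1 ^ 2 - p.2 ^ 2 = m)

lemma pairs_card (N : ℕ) (m : ℤ) (hm : m ≠ 0) : (pairs N m).card ≤ 2 * m.natAbs.divisors.card := by
  classical
  set S : Finset ℤ := m.natAbs.divisors.image (fun d : ℕ => (d : ℤ)) ∪ m.natAbs.divisors.image (fun d : ℕ => -(d : ℤ)) with hS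
  have h1 : S.card ≤ 2 * m.natAbs.divisors.card := by
    refine (card_union_le _ _).trans ?_
    have := card_image_le (s := m.natAbs.divisors) (f := fun d : ℕ => (d : ℤ))
    have := card_image_le (s := m.natAbs.divisors) (f := fun d : ℕ => -(d : ℤ))
    omega
  refine le_trans (card_le_card_of_injOn (fun p => p.1 - p.2) ?_ ?_) h1
  · intro p hp
    have hp := (mem_filter.1 hp).2
    have hd : (p.1 - p.2) ∣ m := ⟨p.1 + p.2, by rw [← hp]; ring⟩
    have hd2 : (p.1 - p.2).natAbs ∈ m.natAbs.divisors :=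
      Nat.mem_divisors.2 ⟨Int.natAbs_dvd_natAbs.2 hd, by simpa using hm⟩
    rw [mem_coe, hS, mem_union, mem_image, mem_image]
    rcases Int.natAbs_eq (p.1 - p.2) with h | h
    · left; exact ⟨_, hd2, h.symm⟩
    · right; exact ⟨_, hd2, h.symm⟩
  · intro p hp p' hp' h
    have hp := (mem_filter.1 hp).2
    have hp' := (mem_filter.1 hp').2
    simp only at h
    have hne : p.1 - p.2 ≠ 0 := by
      intro h0
      apply hm
      rw [← hp]
      have : p.1 = p.2 := by linarith
      rw [this]; ring
    have h2 : p.1 + p.2 = p'.1 + p'.2 := by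
      apply mul_left_cancel₀ hne
      have e1 : (p.1 - p.2) * (p.1 + p.2) = m := by rw [← hp]; ring
      have e2 : (p.1 - p.2) * (p'.1 + p'.2) = m := by rw [h, ← hp']; ring
      rw [e1, e2]
    ext <;> linarith

/-- Fourier coefficients of `|F|²` -/
def cc (N : ℕ) (f : ℤ → ℂ) (m : ℤ) : ℂ := ∑ p ∈ pairs N m, f p.1 * starRingEnd ℂ (f p.2)

lemma FF_sq (N : ℕ) (f : ℤ → ℂ) (j M : ℕ) :
    ((‖FF N f (j / M)‖ ^ 2 : ℝ) : ℂ) = ∑ m ∈ Icc (-(N : ℤ) ^ 2) (N ^ 2), cc N f m * ee (m * j / M) := by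
  have key : ∀ z : ℂ, ((‖z‖ ^ 2 : ℝ) : ℂ) = z * starRingEnd ℂ z := by
    intro z
    rw [Complex.mul_conj, Complex.normSq_eq_norm_sq]
  have hmaps : ∀ p ∈ Icc (-(N : ℤ)) N ×ˢ Icc (-(N : ℤ)) N, p.1 ^ 2 - p.2 ^ 2 ∈ Icc (-(N : ℤ) ^ 2) (N ^ 2) := by
    intro p hp
    rw [mem_product, mem_Icc, mem_Icc] at hp
    have h1 : p.1 ^ 2 ≤ (N : ℤ) ^ 2 := sq_le_sq' hp.1.1 hp.1.2
    have h2 : p.2 ^ 2 ≤ (N : ℤ) ^ 2 := sq_le_sq' hp.2.1 hp.2.2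
    rw [mem_Icc]
    constructor <;> nlinarith [sq_nonneg p.1, sq_nonneg p.2]
  rw [key, FF, map_sum, sum_mul_sum, ← sum_product', ← sum_fiberwise_of_maps_to hmaps]
  refine sum_congr rfl fun m _ => ?_
  rw [cc, sum_mul, pairs]
  refine sum_congr rfl fun p hp => ?_
  have hp := (mem_filter.1 hp).2
  have hpr : (p.1 : ℝ) ^ 2 - (p.2 : ℝ) ^ 2 = m := by exact_mod_cast hp
  rw [map_mul, ← ee_neg]
  have : ee (m * j / M) = ee ((p.1 : ℝ) ^ 2 * (j / M)) * ee (-((p.2 : ℝ) ^ 2 * (j / M))) := by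
    rw [← ee_add]
    congr 1
    rw [← hpr]
    ring
  rw [this]
  ring

lemma fourth_moment : ∃ C : ℝ, 1 ≤ C ∧ ∀ N : ℕ, 1 ≤ N → ∀ f : ℤ → ℂ,
    ∑ x ∈ Icc (-(N : ℤ)) N, ‖f x‖ ^ 2 ≤ N →
    ∑ j ∈ range (20 * N ^ 2), ‖FF N f (j / (20 * N ^ 2 : ℕ))‖ ^ 4 ≤ C * (N : ℝ) ^ 4 * (N : ℝ) ^ (1 / 8 : ℝ) := by
  obtain ⟨C1, hC1, hdiv⟩ := divisor_bound (1 / 16) (by norm_num)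
  refine ⟨20 * (4 + 2 * C1), by linarith, ?_⟩
  intro N hN f hf
  have hNr : (1 : ℝ) ≤ N := by exact_mod_cast hN
  set M := 20 * N ^ 2 with hM
  have hM0 : 0 < M := by positivity
  set box := Icc (-(N : ℤ)) N ×ˢ Icc (-(N : ℤ)) N with hbox
  set J := Icc (-(N : ℤ) ^ 2) (N ^ 2) with hJ
  have h1 : ∑ j ∈ range M, ‖FF N f (j / M)‖ ^ 4 = M * ∑ m ∈ J, ‖cc N f m‖ ^ 2 := by
    rw [← parseval M hM0 J (fun m => m) (cc N f)]
    · refine sum_congr rfl fun j _ => ?_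
      rw [← FF_sq, Complex.norm_real, Real.norm_of_nonneg (by positivity)]
      ring
    · intro s hs t ht hd
      rw [hJ, mem_Icc] at hs ht
      have hN2 : (1 : ℤ) ≤ (N : ℤ) ^ 2 := by
        have : 1 ≤ N ^ 2 := Nat.one_le_pow _ _ hN
        exact_mod_cast this
      have : s - t = 0 := by
        apply Int.eq_zero_of_abs_lt_dvd hd
        rw [hM, abs_lt]
        push_cast
        constructor <;> linarith
      linarith
  have hff : ∑ p ∈ box, ‖f p.1‖ ^ 2 * ‖f p.2‖ ^ 2 ≤ N ^ 2 := by
    rw [hbox, sum_product]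
    simp only
    rw [← sum_mul_sum, sq]
    have : 0 ≤ ∑ x ∈ Icc (-(N : ℤ)) N, ‖f x‖ ^ 2 := sum_nonneg fun _ _ => by positivity
    gcongr
  have h0 : ‖cc N f 0‖ ^ 2 ≤ 4 * (N : ℝ) ^ 2 := by
    have : ‖cc N f 0‖ ≤ 2 * N := by
      calc ‖cc N f 0‖ ≤ ∑ p ∈ pairs N 0, ‖f p.1‖ * ‖f p.2‖ := by
            rw [cc]
            refine (norm_sum_le _ _).trans (sum_le_sum fun p _ => ?_)
            rw [norm_mul, RCLike.norm_conj]
        _ = ∑ p ∈ box, if p.1 ^ 2 - p.2 ^ 2 = 0 then ‖f p.1‖ * ‖f p.2‖ else 0 := by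
            rw [pairs, sum_filter]
        _ ≤ ∑ p ∈ box, ((if p.2 = p.1 then ‖f p.1‖ ^ 2 else 0) + (if p.2 = -p.1 then ‖f p.1‖ * ‖f (-p.1)‖ else 0)) := by
            refine sum_le_sum fun p _ => ?_
            split_ifs with a b c d e
            · rw [b]; nlinarith [norm_nonneg (f p.1), norm_nonneg (f (-p.1))]
            · rw [b]; nlinarith [norm_nonneg (f p.1)]
            · rw [d]; linarith
            · exfalso
              have : (p.2 - p.1) * (p.2 + p.1) = 0 := by linarith
              rcases mul_eq_zero.1 this with h | h
              · exact b (by linarith)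
              · exact d (by linarith)
            all_goals positivity
        _ ≤ ∑ x ∈ Icc (-(N : ℤ)) N, (‖f x‖ ^ 2 + ‖f x‖ * ‖f (-x)‖) := by
            rw [hbox, sum_product]
            refine sum_le_sum fun x _ => ?_
            simp only
            rw [sum_add_distrib, sum_ite_eq', sum_ite_eq']
            gcongr <;> split_ifs <;> first | exact le_rfl | positivity
        _ ≤ ∑ x ∈ Icc (-(N : ℤ)) N, (3 / 2 * ‖f x‖ ^ 2 + 1 / 2 * ‖f (-x)‖ ^ 2) := by
            refine sum_le_sum fun x _ => ?_
            nlinarith [sq_nonneg (‖f x‖ - ‖f (-x)‖)]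
        _ = 2 * ∑ x ∈ Icc (-(N : ℤ)) N, ‖f x‖ ^ 2 := by
            have hneg : ∑ x ∈ Icc (-(N : ℤ)) N, ‖f (-x)‖ ^ 2 = ∑ x ∈ Icc (-(N : ℤ)) N, ‖f x‖ ^ 2 := by
              refine sum_nbij' (fun y => -y) (fun y => -y) ?_ ?_ ?_ ?_ ?_ <;> simp <;> intros <;> omega
            rw [sum_add_distrib, ← mul_sum, ← mul_sum, hneg]
            ring
        _ ≤ _ := by gcongr
    calc _ ≤ (2 * (N : ℝ)) ^ 2 := by gcongr
      _ = _ := by ring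
  have hm : ∀ m ∈ J.erase 0, ‖cc N f m‖ ^ 2 ≤ 2 * C1 * (N : ℝ) ^ (1 / 8 : ℝ) * ∑ p ∈ pairs N m, ‖f p.1‖ ^ 2 * ‖f p.2‖ ^ 2 := by
    intro m hm
    rw [mem_erase] at hm
    have hmJ := mem_Icc.1 hm.2
    have hcard : ((pairs N m).card : ℝ) ≤ 2 * C1 * (N : ℝ) ^ (1 / 8 : ℝ) := by
      have a1 : ((pairs N m).card : ℝ) ≤ 2 * (m.natAbs.divisors.card : ℝ) := by exact_mod_cast pairs_card N m hm.1
      have a2 := hdiv m.natAbs (by simpa using hm.1)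
      have a3 : ((m.natAbs : ℕ) : ℝ) ≤ (N : ℝ) ^ 2 := by
        have : m.natAbs ≤ N ^ 2 := by
          zify
          rw [abs_le]
          constructor <;> linarith
        exact_mod_cast this
      have a4 : ((m.natAbs : ℕ) : ℝ) ^ (1 / 16 : ℝ) ≤ (N : ℝ) ^ (1 / 8 : ℝ) := by
        calc _ ≤ ((N : ℝ) ^ 2) ^ (1 / 16 : ℝ) := by gcongr
          _ = _ := by
            rw [← Real.rpow_natCast, ← Real.rpow_mul (by positivity)]
            norm_num
      calc _ ≤ 2 * (C1 * ((m.natAbs : ℕ) : ℝ) ^ (1 / 16 : ℝ)) := by linarith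
        _ ≤ 2 * (C1 * (N : ℝ) ^ (1 / 8 : ℝ)) := by gcongr
        _ = _ := by ring
    calc ‖cc N f m‖ ^ 2 ≤ (∑ p ∈ pairs N m, ‖f p.1‖ * ‖f p.2‖) ^ 2 := by
          gcongr
          rw [cc]
          refine (norm_sum_le _ _).trans (sum_le_sum fun p _ => ?_)
          rw [norm_mul, RCLike.norm_conj]
      _ ≤ (pairs N m).card * ∑ p ∈ pairs N m, (‖f p.1‖ * ‖f p.2‖) ^ 2 := sq_sum_le_card_mul_sum_sq
      _ = (pairs N m).card * ∑ p ∈ pairs N m, ‖f p.1‖ ^ 2 * ‖f p.2‖ ^ 2 := by simp_rw [mul_pow]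
      _ ≤ _ := by
          have : 0 ≤ ∑ p ∈ pairs N m, ‖f p.1‖ ^ 2 * ‖f p.2‖ ^ 2 := sum_nonneg fun _ _ => by positivity
          gcongr
  have hP1 : (1 : ℝ) ≤ (N : ℝ) ^ (1 / 8 : ℝ) := Real.one_le_rpow hNr (by norm_num)
  set P := (N : ℝ) ^ (1 / 8 : ℝ)
  have h0J : (0 : ℤ) ∈ J := by
    rw [hJ, mem_Icc]
    constructor <;> nlinarith [sq_nonneg (N : ℤ)]
  have hsum : ∑ m ∈ J, ‖cc N f m‖ ^ 2 ≤ (4 + 2 * C1) * (N : ℝ) ^ 2 * P := by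
    rw [← add_sum_erase _ _ h0J]
    have hs : ∑ m ∈ J.erase 0, ‖cc N f m‖ ^ 2 ≤ 2 * C1 * P * N ^ 2 := by
      calc _ ≤ ∑ m ∈ J.erase 0, 2 * C1 * P * ∑ p ∈ pairs N m, ‖f p.1‖ ^ 2 * ‖f p.2‖ ^ 2 := sum_le_sum hm
        _ = 2 * C1 * P * ∑ m ∈ J.erase 0, ∑ p ∈ pairs N m, ‖f p.1‖ ^ 2 * ‖f p.2‖ ^ 2 := by rw [mul_sum]
        _ ≤ 2 * C1 * P * ∑ p ∈ box, ‖f p.1‖ ^ 2 * ‖f p.2‖ ^ 2 := by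
            gcongr
            simp_rw [pairs]
            exact sum_fiberwise_le_sum_of_sum_fiber_nonneg (fun m _ => sum_nonneg fun _ _ => by positivity)
        _ ≤ _ := by gcongr
    have : 4 * (N : ℝ) ^ 2 ≤ 4 * (N : ℝ) ^ 2 * P := le_mul_of_one_le_right (by positivity) hP1
    linarith
  rw [h1]
  have hMr : (M : ℝ) = 20 * N ^ 2 := by rw [hM]; push_cast; ring
  calc _ ≤ (M : ℝ) * ((4 + 2 * C1) * (N : ℝ) ^ 2 * P) := by gcongr
    _ = _ := by rw [hMr]; ring

lemma level_set : ∃ C : ℝ, 1 ≤ C ∧ ∀ N : ℕ, 1 ≤ N → ∀ f : ℤ → ℂ,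
    ∑ x ∈ Icc (-(N : ℤ)) N, ‖f x‖ ^ 2 ≤ N → ∀ γ : ℝ, 0 < γ → γ ≤ 1 →
    ∀ U ⊆ range (20 * N ^ 2), (∀ r ∈ U, γ ^ 2 * N ≤ ‖FF N f (r / (20 * N ^ 2 : ℕ))‖) →
      (U.card : ℝ) ≤ C / γ ^ 9 := by
  obtain ⟨C1, hC1, h1⟩ := level_large
  obtain ⟨C2, hC2, h2⟩ := fourth_moment
  refine ⟨C1 * C2, by nlinarith, ?_⟩
  intro N hN f hf γ hγ hγ1 U hU hUF
  have hNr : (1 : ℝ) ≤ N := by exact_mod_cast hN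
  rcases le_total C1 (γ ^ 8 * N) with h | h
  · refine (h1 N hN f hf γ hγ hγ1 h U hU hUF).trans ?_
    gcongr
    nlinarith
  · have h3 := h2 N hN f hf
    have h4 : U.card * (γ ^ 2 * N) ^ 4 ≤ C2 * (N : ℝ) ^ 4 * (N : ℝ) ^ (1 / 8 : ℝ) := by
      refine le_trans ?_ h3
      calc U.card * (γ ^ 2 * N) ^ 4 = ∑ r ∈ U, (γ ^ 2 * (N : ℝ)) ^ 4 := by rw [sum_const, nsmul_eq_mul]
        _ ≤ ∑ r ∈ U, ‖FF N f (r / (20 * N ^ 2 : ℕ))‖ ^ 4 := by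
            refine sum_le_sum fun r hr => ?_
            have := hUF r hr
            gcongr
        _ ≤ _ := sum_le_sum_of_subset_of_nonneg hU (fun _ _ _ => by positivity)
    have h5 : (N : ℝ) ^ (1 / 8 : ℝ) * γ ≤ C1 := by
      have e : γ = (γ ^ 8) ^ (1 / 8 : ℝ) := by
        rw [← Real.rpow_natCast, ← Real.rpow_mul hγ.le]
        norm_num
      calc (N : ℝ) ^ (1 / 8 : ℝ) * γ = (N : ℝ) ^ (1 / 8 : ℝ) * (γ ^ 8) ^ (1 / 8 : ℝ) := by rw [← e]
        _ = (γ ^ 8 * N) ^ (1 / 8 : ℝ) := by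
            rw [Real.mul_rpow (by positivity) (by positivity), mul_comm]
        _ ≤ C1 ^ (1 / 8 : ℝ) := by gcongr
        _ ≤ C1 ^ (1 : ℝ) := Real.rpow_le_rpow_of_exponent_le hC1 (by norm_num)
        _ = C1 := Real.rpow_one _
    rw [le_div_iff₀ (by positivity)]
    have h6 : U.card * γ ^ 8 ≤ C2 * (N : ℝ) ^ (1 / 8 : ℝ) := by
      have : (U.card * γ ^ 8) * (N : ℝ) ^ 4 ≤ (C2 * (N : ℝ) ^ (1 / 8 : ℝ)) * N ^ 4 := by
        calc _ = U.card * (γ ^ 2 * N) ^ 4 := by ring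
          _ ≤ _ := h4
          _ = _ := by ring
      exact le_of_mul_le_mul_right this (by positivity)
    calc (U.card : ℝ) * γ ^ 9 = U.card * γ ^ 8 * γ := by ring
      _ ≤ C2 * (N : ℝ) ^ (1 / 8 : ℝ) * γ := by gcongr
      _ = C2 * ((N : ℝ) ^ (1 / 8 : ℝ) * γ) := by ring
      _ ≤ C2 * C1 := by gcongr
      _ = _ := by ring

lemma FF_le (N : ℕ) (hN : 1 ≤ N) (f : ℤ → ℂ) (hf : ∑ x ∈ Icc (-(N : ℤ)) N, ‖f x‖ ^ 2 ≤ N) (θ : ℝ) :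
    ‖FF N f θ‖ ≤ 4 * N := by
  have hNr : (1 : ℝ) ≤ N := by exact_mod_cast hN
  have h1 : ‖FF N f θ‖ ≤ ∑ x ∈ Icc (-(N : ℤ)) N, ‖f x‖ := by
    rw [FF]
    refine (norm_sum_le _ _).trans (sum_le_sum fun x _ => ?_)
    rw [norm_mul, ee_norm, mul_one]
  have h2 : (∑ x ∈ Icc (-(N : ℤ)) N, ‖f x‖) ^ 2 ≤ (2 * N + 1) * N := by
    refine sq_sum_le_card_mul_sum_sq.trans ?_
    have : (((Icc (-(N : ℤ)) N).card : ℕ) : ℝ) = 2 * N + 1 := by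
      rw [Int.card_Icc]
      have : (((N : ℤ) + 1 - -N).toNat : ℤ) = 2 * N + 1 := by omega
      exact_mod_cast this
    rw [this]
    gcongr
  have h3 : (∑ x ∈ Icc (-(N : ℤ)) N, ‖f x‖) ^ 2 ≤ (4 * (N : ℝ)) ^ 2 := by nlinarith
  exact h1.trans (abs_le_of_sq_le_sq' h3 (by positivity)).2

lemma fifth_moment : ∃ C : ℝ, 1 ≤ C ∧ ∀ N : ℕ, 1 ≤ N → ∀ f : ℤ → ℂ,
    ∑ x ∈ Icc (-(N : ℤ)) N, ‖f x‖ ^ 2 ≤ N →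
    ∑ j ∈ range (20 * N ^ 2), ‖FF N f (j / (20 * N ^ 2 : ℕ))‖ ^ 5 ≤ C * (N : ℝ) ^ 5 := by
  obtain ⟨C1, hC1, h1⟩ := level_set
  refine ⟨1024 + 2048 * C1, by linarith, ?_⟩
  intro N hN f hf
  have hNr : (1 : ℝ) ≤ N := by exact_mod_cast hN
  set M := 20 * N ^ 2 with hM
  set b : ℕ → ℝ := fun i => (4 * (1 / 4) ^ i) ^ 5 with hb
  have hl : ∀ j ∈ range M, (‖FF N f (j / M)‖ / N) ^ 5 ≤ b M +
      ∑ i ∈ range M, if (1 / 4 : ℝ) ^ i < ‖FF N f (j / M)‖ / N then b i else 0 := by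
    intro j _
    refine layer _ b (fun i => (1 / 4 : ℝ) ^ i < ‖FF N f (j / M)‖ / N) (fun i => by simp only [hb]; positivity) ?_ ?_ M
    · simp only [hb]
      gcongr
      rw [pow_zero, mul_one, div_le_iff₀ (by positivity)]
      exact FF_le N hN f hf _
    · intro i hi
      simp only [hb]
      have := not_lt.1 hi
      gcongr
      rw [pow_succ]
      linarith
  have h2 : ∑ j ∈ range M, (‖FF N f (j / M)‖ / N) ^ 5 ≤ 1024 + 2048 * C1 := by
    calc _ ≤ ∑ j ∈ range M, (b M + ∑ i ∈ range M, if (1 / 4 : ℝ) ^ i < ‖FF N f (j / M)‖ / N then b i else 0) :=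
          sum_le_sum hl
      _ = M * b M + ∑ i ∈ range M, (((range M).filter (fun j : ℕ => (1 / 4 : ℝ) ^ i < ‖FF N f (j / M)‖ / N)).card : ℝ) * b i := by
          rw [sum_add_distrib, sum_const, card_range, nsmul_eq_mul, sum_comm]
          congr 1
          refine sum_congr rfl fun i _ => ?_
          rw [← sum_filter, sum_const, nsmul_eq_mul]
      _ ≤ 1024 + ∑ i ∈ range M, 1024 * C1 * (1 / 2) ^ i := by
          refine add_le_add ?_ (sum_le_sum fun i hi => ?_)
          · simp only [hb]
            rw [mul_pow, ← pow_mul]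
            have a1 : (M : ℝ) ≤ 2 ^ M := by exact_mod_cast Nat.lt_two_pow_self.le
            have a2 : (1 / 4 : ℝ) ^ (M * 5) ≤ (1 / 2) ^ M := by
              calc (1 / 4 : ℝ) ^ (M * 5) ≤ (1 / 4) ^ M := pow_le_pow_of_le_one (by norm_num) (by norm_num) (by omega)
                _ ≤ _ := by gcongr; norm_num
            calc (M : ℝ) * (4 ^ 5 * (1 / 4) ^ (M * 5)) ≤ 2 ^ M * (4 ^ 5 * (1 / 2) ^ M) := by gcongr
              _ = 4 ^ 5 * (2 * (1 / 2)) ^ M := by rw [mul_pow]; ring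
              _ = 1024 := by norm_num
          · have := h1 N hN f hf ((1 / 2) ^ i) (by positivity) (pow_le_one₀ (by norm_num) (by norm_num))
              ((range M).filter (fun j : ℕ => (1 / 4 : ℝ) ^ i < ‖FF N f (j / M)‖ / N)) (filter_subset _ _) (by
                intro r hr
                have hr := (mem_filter.1 hr).2
                rw [lt_div_iff₀ (by positivity)] at hr
                refine le_trans (le_of_eq ?_) hr.le
                rw [← pow_mul, mul_comm i 2, pow_mul]
                norm_num)
            calc _ ≤ C1 / ((1 / 2) ^ i) ^ 9 * b i :=
                  mul_le_mul_of_nonneg_right this (by simp only [hb]; positivity)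
              _ = _ := by
                  simp only [hb]
                  have e : (1 / 4 : ℝ) ^ i = ((1 / 2) ^ i) ^ 2 := by
                    rw [← pow_mul, mul_comm i 2, pow_mul]; norm_num
                  rw [e]
                  have : ((1 / 2 : ℝ) ^ i) ≠ 0 := by positivity
                  generalize (1 / 2 : ℝ) ^ i = g at this ⊢
                  field_simp
                  norm_num
      _ ≤ 1024 + 1024 * C1 * 2 := by
          rw [← mul_sum]
          gcongr
          exact sum_geometric_two_le M
      _ = _ := by ring
  have h3 : ∑ j ∈ range M, ‖FF N f (j / M)‖ ^ 5 = (∑ j ∈ range M, (‖FF N f (j / M)‖ / N) ^ 5) * N ^ 5 := by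
    rw [sum_mul]
    refine sum_congr rfl fun j _ => ?_
    field_simp
  rw [h3]
  gcongr

/-! ## Multilinear bound -/

lemma ee_sum {n : ℕ} (t : Fin n → ℝ) : ee (∑ i, t i) = ∏ i, ee (t i) := by
  classical
  have : ∀ s : Finset (Fin n), ee (∑ i ∈ s, t i) = ∏ i ∈ s, ee (t i) := by
    intro s
    induction s using Finset.induction_on with
    | empty => simp
    | insert a s ha ih => rw [sum_insert ha, prod_insert ha, ee_add, ih]
  exact this _

/-- the box `[-N,N]^n` -/
def bx (n N : ℕ) : Finset (Fin n → ℤ) := Fintype.piFinset fun _ => Icc (-(N : ℤ)) N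

lemma circle (n N M : ℕ) (hM : 0 < M) (f : Fin n → ℤ → ℂ) (m : ℤ) :
    ∑ j ∈ range M, ee (-(m * j / M)) * ∏ i, FF N (f i) (j / M) =
      M * ∑ x ∈ (bx n N).filter (fun x => (M : ℤ) ∣ ∑ i, x i ^ 2 - m), ∏ i, f i (x i) := by
  have h1 : ∀ j ∈ range M, ee (-(m * j / M)) * ∏ i, FF N (f i) (j / M) =
      ∑ x ∈ bx n N, (∏ i, f i (x i)) * ee (((∑ i, x i ^ 2 - m : ℤ) : ℝ) * j / M) := by
    intro j _
    simp only [FF]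
    rw [prod_univ_sum, mul_sum]
    refine sum_congr rfl fun x _ => ?_
    rw [prod_mul_distrib, ← ee_sum, mul_left_comm, ← ee_add]
    congr 2
    push_cast
    rw [← sum_mul]
    ring
  rw [sum_congr rfl h1, sum_comm, sum_filter, mul_sum]
  refine sum_congr rfl fun x _ => ?_
  rw [← mul_sum, orth M hM]
  split_ifs
  · ring
  · simp

lemma prod_le_sum_pow {n : ℕ} (hn : 0 < n) (a : Fin n → ℝ) (ha : ∀ i, 0 ≤ a i) :
    ∏ i, a i ≤ ∑ i, a i ^ n := by
  haveI : Nonempty (Fin n) := ⟨⟨0, hn⟩⟩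
  obtain ⟨k, _, hk⟩ := exists_max_image (univ : Finset (Fin n)) a univ_nonempty
  calc ∏ i, a i ≤ ∏ _i : Fin n, a k := prod_le_prod (fun i _ => ha i) (fun i hi => hk i hi)
    _ = a k ^ n := by simp
    _ ≤ _ := single_le_sum (f := fun i => a i ^ n) (fun i _ => pow_nonneg (ha i) n) (mem_univ k)

lemma multi_norm (n : ℕ) (hn : 5 ≤ n) : ∃ C : ℝ, 0 ≤ C ∧ ∀ N : ℕ, 1 ≤ N → ∀ g : Fin n → ℤ → ℝ,
    (∀ i x, 0 ≤ g i x) → (∀ i, ∑ x ∈ Icc (-(N : ℤ)) N, g i x ^ 2 ≤ N) → ∀ m : ℤ,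
    ∑ x ∈ (bx n N).filter (fun x => ∑ i, x i ^ 2 = m), ∏ i, g i (x i) ≤ C * (N : ℝ) ^ (n - 2) := by
  obtain ⟨C, hC, h5⟩ := fifth_moment
  refine ⟨n * (C * 4 ^ (n - 5)), by positivity, ?_⟩
  intro N hN g hg hg2 m
  have hNr : (1 : ℝ) ≤ N := by exact_mod_cast hN
  obtain ⟨k, rfl⟩ : ∃ k, n = k + 5 := ⟨n - 5, by omega⟩
  set M := 20 * N ^ 2 with hM
  have hM0 : 0 < M := by positivity
  have hMr : (M : ℝ) = 20 * N ^ 2 := by rw [hM]; push_cast; ring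
  have hf : ∀ i, ∑ x ∈ Icc (-(N : ℤ)) N, ‖((g i x : ℝ) : ℂ)‖ ^ 2 ≤ N := by
    intro i
    refine le_trans (le_of_eq (sum_congr rfl fun x _ => ?_)) (hg2 i)
    rw [Complex.norm_real, Real.norm_of_nonneg (hg i x)]
  have hc := circle (k + 5) N M hM0 (fun i x => ((g i x : ℝ) : ℂ)) m
  set F : Fin (k + 5) → ℕ → ℝ := fun i j => ‖FF N (fun x => ((g i x : ℝ) : ℂ)) (j / M)‖ with hF
  have hle : ∑ x ∈ (bx (k + 5) N).filter (fun x => ∑ i, x i ^ 2 = m), ∏ i, g i (x i) ≤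
      ∑ x ∈ (bx (k + 5) N).filter (fun x => (M : ℤ) ∣ ∑ i, x i ^ 2 - m), ∏ i, g i (x i) := by
    refine sum_le_sum_of_subset_of_nonneg ?_ (fun x _ _ => prod_nonneg fun i _ => hg i _)
    intro x hx
    rw [mem_filter] at hx ⊢
    refine ⟨hx.1, ?_⟩
    rw [hx.2, sub_self]
    exact dvd_zero _
  set S := ∑ x ∈ (bx (k + 5) N).filter (fun x => (M : ℤ) ∣ ∑ i, x i ^ 2 - m), ∏ i, g i (x i) with hS
  have hS0 : 0 ≤ S := sum_nonneg fun x _ => prod_nonneg fun i _ => hg i _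
  have hMS : (M : ℝ) * S ≤ ∑ j ∈ range M, ∏ i, F i j := by
    have e : (M : ℝ) * S = ‖∑ j ∈ range M, ee (-(m * j / M)) * ∏ i, FF N (fun x => ((g i x : ℝ) : ℂ)) (j / M)‖ := by
      rw [hc]
      have : (M : ℂ) * ∑ x ∈ (bx (k + 5) N).filter (fun x => (M : ℤ) ∣ ∑ i, x i ^ 2 - m), ∏ i, ((g i (x i) : ℝ) : ℂ)
          = ((M * S : ℝ) : ℂ) := by
        rw [hS]; push_cast; rfl
      rw [this, Complex.norm_real, Real.norm_of_nonneg (by positivity)]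
    rw [e]
    refine (norm_sum_le _ _).trans (sum_le_sum fun j _ => ?_)
    rw [norm_mul, ee_norm, one_mul, norm_prod]
  have hb : ∑ j ∈ range M, ∏ i, F i j ≤ (k + 5) * ((4 * (N : ℝ)) ^ k * (C * N ^ 5)) := by
    calc _ ≤ ∑ j ∈ range M, ∑ i, (4 * (N : ℝ)) ^ k * F i j ^ 5 := by
          refine sum_le_sum fun j _ => ?_
          refine (prod_le_sum_pow (by omega) _ (fun i => norm_nonneg _)).trans (sum_le_sum fun i _ => ?_)
          rw [pow_add]
          have h4 : F i j ≤ 4 * N := FF_le N hN _ (hf i) _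
          have h0 : 0 ≤ F i j := norm_nonneg _
          gcongr
      _ = ∑ i : Fin (k + 5), (4 * (N : ℝ)) ^ k * ∑ j ∈ range M, F i j ^ 5 := by
          rw [sum_comm]
          simp_rw [mul_sum]
      _ ≤ ∑ i : Fin (k + 5), (4 * (N : ℝ)) ^ k * (C * N ^ 5) := by
          refine sum_le_sum fun i _ => ?_
          have := h5 N hN _ (hf i)
          gcongr
      _ = _ := by simp
  have hfin : S * (20 * N ^ 2) ≤ (((k + 5 : ℕ) : ℝ) * (C * 4 ^ (k + 5 - 5)) * (N : ℝ) ^ (k + 5 - 2)) * (20 * N ^ 2) := by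
    calc S * (20 * N ^ 2) = M * S := by rw [hMr]; ring
      _ ≤ (k + 5) * ((4 * (N : ℝ)) ^ k * (C * N ^ 5)) := hMS.trans hb
      _ = (((k + 5 : ℕ) : ℝ) * (C * 4 ^ (k + 5 - 5)) * (N : ℝ) ^ (k + 5 - 2)) * N ^ 2 := by
          rw [Nat.add_sub_cancel, show k + 5 - 2 = k + 3 by omega]
          push_cast
          ring
      _ ≤ _ := by
          gcongr
          nlinarith
  exact hle.trans (le_of_mul_le_mul_right hfin (by positivity))

lemma multi (n : ℕ) (hn : 5 ≤ n) : ∃ C : ℝ, 0 ≤ C ∧ ∀ N : ℕ, 1 ≤ N → ∀ g : Fin n → ℤ → ℝ,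
    (∀ i x, 0 ≤ g i x) → ∀ m : ℤ,
    ∑ x ∈ (bx n N).filter (fun x => ∑ i, x i ^ 2 = m), ∏ i, g i (x i) ≤
      C * (N : ℝ) ^ (n - 2) * ∏ i, Real.sqrt ((N : ℝ)⁻¹ * ∑ x ∈ Icc (-(N : ℤ)) N, g i x ^ 2) := by
  obtain ⟨C, hC, h⟩ := multi_norm n hn
  refine ⟨C, hC, ?_⟩
  intro N hN g hg m
  have hNr : (1 : ℝ) ≤ N := by exact_mod_cast hN
  set s : Fin n → ℝ := fun i => Real.sqrt ((N : ℝ)⁻¹ * ∑ x ∈ Icc (-(N : ℤ)) N, g i x ^ 2) with hs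
  have hQ : ∀ i, 0 ≤ ∑ x ∈ Icc (-(N : ℤ)) N, g i x ^ 2 := fun i => sum_nonneg fun _ _ => by positivity
  have hs0 : ∀ i, 0 ≤ s i := fun i => Real.sqrt_nonneg _
  have hsq : ∀ i, s i ^ 2 * N = ∑ x ∈ Icc (-(N : ℤ)) N, g i x ^ 2 := by
    intro i
    rw [hs, Real.sq_sqrt (mul_nonneg (by positivity) (hQ i))]
    field_simp
  by_cases hz : ∃ i, s i = 0
  · obtain ⟨i, hi⟩ := hz
    have h0 : ∑ x ∈ Icc (-(N : ℤ)) N, g i x ^ 2 = 0 := by rw [← hsq, hi]; ring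
    rw [sum_eq_zero_iff_of_nonneg (fun _ _ => by positivity)] at h0
    have : ∑ x ∈ (bx n N).filter (fun x => ∑ i, x i ^ 2 = m), ∏ i, g i (x i) = 0 := by
      refine sum_eq_zero fun x hx => prod_eq_zero (mem_univ i) ?_
      have hx := Fintype.mem_piFinset.1 (mem_filter.1 hx).1 i
      exact pow_eq_zero_iff (two_ne_zero) |>.1 (h0 _ hx)
    rw [this]
    have := prod_nonneg (fun i (_ : i ∈ (univ : Finset (Fin n))) => hs0 i)
    positivity
  · push Not at hz
    have hsp : ∀ i, 0 < s i := fun i => lt_of_le_of_ne (hs0 i) (hz i).symm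
    have h1 := h N hN (fun i x => g i x / s i) (fun i x => div_nonneg (hg i x) (hs0 i)) (by
      intro i
      simp only [div_pow]
      rw [← sum_div, ← hsq, mul_comm, mul_div_assoc, div_self (pow_ne_zero _ (hz i)), mul_one]) m
    have hP : 0 < ∏ i, s i := prod_pos fun i _ => hsp i
    have e : ∑ x ∈ (bx n N).filter (fun x => ∑ i, x i ^ 2 = m), ∏ i, (g i (x i) / s i) =
        (∑ x ∈ (bx n N).filter (fun x => ∑ i, x i ^ 2 = m), ∏ i, g i (x i)) / ∏ i, s i := by
      rw [sum_div]
      refine sum_congr rfl fun x _ => ?_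
      rw [prod_div_distrib]
    rw [e, div_le_iff₀ hP] at h1
    exact h1

/-! ## Assembly -/

lemma avg_bound (n : ℕ) (hn : 5 ≤ n) : ∃ C : ℝ, 0 ≤ C ∧ ∀ f : Fin n → ℤ → ℂ, ∀ y : ℤ, ∀ lam : ℕ, 1 ≤ lam →
    ∃ N : ℕ, 1 ≤ N ∧ ‖mulAvg n lam f y‖ ≤
      C * ∏ i, Real.sqrt ((N : ℝ)⁻¹ * ∑ x ∈ Icc (-(N : ℤ)) N, ‖f i (y - x)‖ ^ 2) := by
  obtain ⟨C, hC, h⟩ := multi n hn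
  obtain ⟨c, hc, hlow⟩ := sphere_lower n hn
  refine ⟨C * 2 ^ (n - 2) / c, by positivity, ?_⟩
  intro f y lam hlam
  refine ⟨Nat.sqrt lam + 1, by omega, ?_⟩
  set N := Nat.sqrt lam + 1 with hN
  have hb := h N (by omega) (fun i x => ‖f i (y - x)‖) (fun i x => norm_nonneg _) lam
  set P := ∏ i, Real.sqrt ((N : ℝ)⁻¹ * ∑ x ∈ Icc (-(N : ℤ)) N, ‖f i (y - x)‖ ^ 2) with hP
  have hP0 : 0 ≤ P := prod_nonneg fun i _ => Real.sqrt_nonneg _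
  have hr := hlow lam hlam
  have hsl : 1 ≤ Real.sqrt lam := Real.one_le_sqrt.2 (by exact_mod_cast hlam)
  have hN2 : (N : ℝ) ≤ 2 * Real.sqrt lam := by
    have : ((Nat.sqrt lam : ℕ) : ℝ) ≤ Real.sqrt lam := Real.nat_sqrt_le_real_sqrt
    rw [hN]
    push_cast
    linarith
  have hsum : ‖∑ᶠ x ∈ {x : Fin n → ℤ | ∑ i, (x i) ^ 2 = (lam : ℤ)}, ∏ i, f i (y - x i)‖ ≤
      ∑ x ∈ (bx n N).filter (fun x => ∑ i, x i ^ 2 = (lam : ℤ)), ∏ i, ‖f i (y - x i)‖ := by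
    have hset : {x : Fin n → ℤ | ∑ i, (x i) ^ 2 = (lam : ℤ)} =
        ((bx n N).filter (fun x => ∑ i, x i ^ 2 = (lam : ℤ)) : Finset (Fin n → ℤ)) := by
      ext x
      rw [mem_coe, mem_filter, Set.mem_setOf_eq]
      refine ⟨fun hx => ⟨?_, hx⟩, fun hx => hx.2⟩
      rw [bx, Fintype.mem_piFinset]
      intro i
      have h1 : x i ^ 2 ≤ (lam : ℤ) := by
        rw [← hx]
        exact single_le_sum (f := fun i => x i ^ 2) (fun _ _ => sq_nonneg _) (mem_univ i)
      have h2 : (lam : ℤ) < (N : ℤ) ^ 2 := by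
        have := Nat.lt_succ_sqrt' lam
        exact_mod_cast this
      have h3 := abs_le_of_sq_le_sq' (h1.trans h2.le) (by positivity)
      exact mem_Icc.2 h3
    rw [hset, finsum_mem_coe_finset]
    refine (norm_sum_le _ _).trans (sum_le_sum fun x _ => ?_)
    rw [norm_prod]
  have hr0 : 0 < (sphereCount n lam : ℝ) := lt_of_lt_of_le (by positivity) hr
  rw [mulAvg, norm_mul, norm_inv, Complex.norm_natCast, inv_mul_le_iff₀ hr0]
  calc _ ≤ C * (N : ℝ) ^ (n - 2) * P := hsum.trans hb
    _ ≤ C * (2 * Real.sqrt lam) ^ (n - 2) * P := by gcongr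
    _ = (c * Real.sqrt lam ^ (n - 2)) * (C * 2 ^ (n - 2) / c * P) := by
        rw [mul_pow]
        field_simp
    _ ≤ _ := by gcongr

lemma sqrt_conv (N : ℕ) (hN : 1 ≤ N) (g : ℤ → ℂ) :
    ENNReal.ofReal (Real.sqrt ((N : ℝ)⁻¹ * ∑ x ∈ Icc (-(N : ℤ)) N, ‖g x‖ ^ 2)) =
      ((N : ℝ≥0∞)⁻¹ * ∑ x ∈ Icc (-(N : ℤ)) N, (‖g x‖₊ : ℝ≥0∞) ^ 2) ^ ((1 : ℝ) / 2) := by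
  have hN0 : (0 : ℝ) < N := by exact_mod_cast hN
  have hQ : 0 ≤ ∑ x ∈ Icc (-(N : ℤ)) N, ‖g x‖ ^ 2 := sum_nonneg fun _ _ => by positivity
  rw [Real.sqrt_eq_rpow, ← ENNReal.ofReal_rpow_of_nonneg (by positivity) (by norm_num),
    ENNReal.ofReal_mul (by positivity), ENNReal.ofReal_inv_of_pos hN0, ENNReal.ofReal_natCast,
    ENNReal.ofReal_sum_of_nonneg (fun _ _ => by positivity)]
  congr 2
  refine sum_congr rfl fun x _ => ?_
  rw [ENNReal.ofReal_pow (norm_nonneg _), ofReal_norm, enorm_eq_nnnorm]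

end S14

/-- pointwise domination by Hardy–Littlewood maximal functions: for
`n ≥ 5` there is a constant `C = C(n)` such that
`A_*[f₁,…,f_n](y) ≤ C ∏_i (sup_{N ≥ 1} N⁻¹ ∑_{|x| ≤ N} |f_i(y - x)|²)^{1/2}`. -/
theorem statement14 (n : ℕ) (hn : 5 ≤ n) :
    ∃ C : ℝ≥0, ∀ f : Fin n → ℤ → ℂ, ∀ y : ℤ,
      maxFn n f y ≤ (C : ℝ≥0∞) *
        ∏ i, (⨆ (N : ℕ) (_ : 1 ≤ N), (N : ℝ≥0∞)⁻¹ *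
            ∑ x ∈ Finset.Icc (-(N : ℤ)) (N : ℤ), (‖f i (y - x)‖₊ : ℝ≥0∞) ^ 2) ^ ((1 : ℝ) / 2) := by
  obtain ⟨C, hC, h⟩ := S14.avg_bound n hn
  refine ⟨C.toNNReal, fun f y => ?_⟩
  refine iSup₂_le fun lam hlam => ?_
  obtain ⟨N, hN, hb⟩ := h f y lam hlam
  have e : (‖mulAvg n lam f y‖₊ : ℝ≥0∞) = ENNReal.ofReal ‖mulAvg n lam f y‖ := by
    rw [ofReal_norm, enorm_eq_nnnorm]
  rw [e]
  refine (ENNReal.ofReal_le_ofReal hb).trans ?_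
  rw [ENNReal.ofReal_mul hC, ENNReal.ofReal_prod_of_nonneg (fun i _ => Real.sqrt_nonneg _)]
  refine mul_le_mul' le_rfl (Finset.prod_le_prod' fun i _ => ?_)
  rw [S14.sqrt_conv N hN (fun x => f i (y - x))]
  refine ENNReal.rpow_le_rpow ?_ (by norm_num)
  exact le_iSup₂ (f := fun (N : ℕ) (_ : 1 ≤ N) => (N : ℝ≥0∞)⁻¹ *
            ∑ x ∈ Finset.Icc (-(N : ℤ)) (N : ℤ), (‖f i (y - x)‖₊ : ℝ≥0∞) ^ 2) N hN
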